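/- arXiv:2604.18410 — 5 statements merged into one kernel-verified Lean document; each statement's English description precedes it below -/
import Mathlib

section
/- Let G be a countably infinite discrete group with a Denjoy action on 𝕋, with unique minimal set Y. Define x ∼ y iff x = y or x and y lie in the closure of the same connected component of 𝕋 \ Y. Then ∼ is an equivalence relation, the quotient space 𝕋/∼ is homeomorphic to 𝕋, the quotient map φ : 𝕋 → 𝕋/∼ is a monotone degree-one map, the action descends to a well-defined action of G on 𝕋/∼ intertwining φ, and this induced action is minimal. -/
open MeasureTheory Topology Filter Set Function

noncomputable section

/-- The circle `ℝ/ℤ`. -/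
abbrev T1 := UnitAddCircle

/-- `F : ℝ → ℝ` is an (increasing, continuous) lift of the circle map `f`. -/
def IsLiftOf (F : ℝ → ℝ) (f : T1 → T1) : Prop :=
  Continuous F ∧ StrictMono F ∧ (∀ x : ℝ, F (x + 1) = F x + 1) ∧
    ∀ x : ℝ, ((F x : T1)) = f ((x : T1))

/-- A circle map is orientation preserving if it admits an increasing lift. -/
def OrientationPreservingMap (f : T1 → T1) : Prop := ∃ F : ℝ → ℝ, IsLiftOf F f

/-- `ρ` is the rotation number of `f`:  `Fⁿ(x)/n → ρ  (mod ℤ)` for a lift `F`. -/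
def HasRotationNumber (f : T1 → T1) (ρ : T1) : Prop :=
  ∃ F : ℝ → ℝ, IsLiftOf F f ∧
    ∀ x : ℝ, Tendsto (fun n : ℕ => ((F^[n] x / (n : ℝ) : ℝ) : T1)) atTop (nhds ρ)

variable (G : Type*) [Group G] [MulAction G T1]

/-- A set is invariant under the action. -/
def InvariantSet (S : Set T1) : Prop := ∀ g : G, ∀ x ∈ S, g • x ∈ S

/-- A minimal set: nonempty, closed, invariant, with no proper nonempty closed
invariant subset. -/
def IsMinimalSet (S : Set T1) : Prop :=
  S.Nonempty ∧ IsClosed S ∧ InvariantSet G S ∧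
    ∀ Z : Set T1, Z.Nonempty → IsClosed Z → InvariantSet G Z → Z ⊆ S → Z = S

/-- The action (by homeomorphisms) is orientation preserving. -/
def OrientationPreservingAction : Prop :=
  (∀ g : G, Continuous fun x : T1 => g • x) ∧
    ∀ g : G, OrientationPreservingMap fun x : T1 => g • x

/-- The action is free. -/
def FreeAction : Prop := ∀ (g : G) (x : T1), g • x = x → g = 1

/-- A Denjoy action: orientation preserving, non-minimal, all orbits infinite. -/
def IsDenjoy : Prop :=
  OrientationPreservingAction G ∧ ¬ IsMinimalSet G (Set.univ : Set T1) ∧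
    ∀ x : T1, (MulAction.orbit G x).Infinite

/-- A monotone degree-one map of the circle: a continuous surjection admitting a
non-decreasing lift `F` with `F(x+1) = F(x)+1`. -/
def MonotoneDegreeOne (φ : T1 → T1) : Prop :=
  Continuous φ ∧ Function.Surjective φ ∧
    ∃ F : ℝ → ℝ, Monotone F ∧ (∀ x : ℝ, F (x + 1) = F x + 1) ∧
      ∀ x : ℝ, ((F x : T1)) = φ ((x : T1))

namespace DenjoyAux

/-- A minimal set of an action by continuous maps with infinite orbits is perfect. -/
lemma perfect_of_minimal {G : Type*} [Group G] [MulAction G T1]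
    (hc : ∀ g : G, Continuous fun x : T1 => g • x)
    (hinf : ∀ x : T1, (MulAction.orbit G x).Infinite) (Y : Set T1) (hY : IsMinimalSet G Y) :
    Perfect Y := by
  obtain ⟨⟨y, hy⟩, hcl, hinv, hmin⟩ := hY
  have hYinf : Y.Infinite := by
    refine (hinf y).mono ?_
    rintro _ ⟨g, rfl⟩
    exact hinv g y hy
  have hsub : derivedSet Y ⊆ Y := (isClosed_iff_derivedSet_subset Y).1 hcl
  have h := hmin (derivedSet Y) ?_ (isClosed_derivedSet Y) ?_ hsub
  · refine ⟨hcl, fun x hx => ?_⟩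
    rw [← h] at hx
    exact hx
  · obtain ⟨x, -, hx⟩ := hYinf.exists_accPt_of_subset_isCompact hcl.isCompact Subset.rfl
    exact ⟨x, hx⟩
  · intro g x hx
    have hx' : AccPt x (𝓟 Y) := hx
    have h1 := hx'.map (hc g).continuousAt (MulAction.injective g)
    refine h1.mono ?_
    rw [map_principal, principal_mono]
    rintro _ ⟨z, hz, rfl⟩
    exact hinv g z hz

/-- There is an atomless probability measure whose support is `Y`. -/
lemma exists_measure {G : Type*} [Group G] [Countable G] [MulAction G T1]
    (hc : ∀ g : G, Continuous fun x : T1 => g • x)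
    (Y : Set T1) (hY : IsMinimalSet G Y) (hP : Perfect Y) :
    ∃ μ : Measure T1, IsProbabilityMeasure μ ∧ (∀ t, μ {t} = 0) ∧ μ Yᶜ = 0 ∧
      ∀ U : Set T1, IsOpen U → (U ∩ Y).Nonempty → μ U ≠ 0 := by
  obtain ⟨hne, hcl, hinv, hmin⟩ := hY
  have hunc : ¬ Countable Y := by
    obtain ⟨f, hfr, -, hfi⟩ := hP.exists_nat_bool_injection hne
    intro hcount
    have : Countable (ℕ → Bool) := by
      refine Function.Injective.countable (f := fun s => (⟨f s, hfr ⟨s, rfl⟩⟩ : Y)) ?_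
      intro a b hab
      exact hfi (congrArg Subtype.val hab)
    have hle := Cardinal.mk_le_aleph0 (α := ℕ → Bool)
    simp only [Cardinal.mk_pi, Cardinal.prod_const, Cardinal.mk_bool, Cardinal.lift_id,
      Cardinal.mk_nat] at hle
    exact absurd hle (not_le.2 (by simpa using Cardinal.cantor Cardinal.aleph0))
  have hR : ¬ Countable ℝ := not_countable
  have : StandardBorelSpace Y := hcl.measurableSet.standardBorel
  let e : ℝ ≃ᵐ Y := PolishSpace.measurableEquivOfNotCountable hR hunc
  let q : ℝ → T1 := fun r => (e r : T1)
  have hq : Measurable q := measurable_subtype_coe.comp e.measurable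
  have hqi : Function.Injective q := Subtype.val_injective.comp e.injective
  let μ₀ : Measure T1 := Measure.map q volume
  have hgm : ∀ g : G, Measurable fun x : T1 => g • x := fun g => (hc g).measurable
  let ν : Measure T1 := Measure.sum fun g : G => Measure.map (fun x => g • x) μ₀
  have hν : ∀ s : Set T1, MeasurableSet s →
      (ν s = 0 ↔ ∀ g : G, volume {r : ℝ | g • q r ∈ s} = 0) := by
    intro s hs
    simp only [ν, μ₀]
    rw [Measure.sum_apply _ hs, ENNReal.tsum_eq_zero]
    refine forall_congr' fun g => ?_
    rw [Measure.map_apply (hgm g) hs, Measure.map_apply hq (hgm g hs)]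
    rfl
  have : NeZero ν := by
    refine ⟨fun h0 => ?_⟩
    have : ν univ = 0 := by rw [h0]; simp
    have := (hν univ MeasurableSet.univ).1 this 1
    simp at this
  refine ⟨ν.toFinite, inferInstance, ?_, ?_, ?_⟩
  · intro t
    rw [toFinite_apply_eq_zero_iff, hν _ (measurableSet_singleton t)]
    intro g
    refine Set.Subsingleton.measure_zero ?_ _
    intro a ha b hb
    exact hqi (MulAction.injective g (ha.trans hb.symm))
  · rw [toFinite_apply_eq_zero_iff, hν _ hcl.measurableSet.compl]
    intro g
    convert measure_empty (μ := (volume : Measure ℝ))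
    ext r
    simp only [mem_ofPred_eq, mem_compl_iff, mem_empty_iff_false, iff_false, not_not]
    exact hinv g _ (e r).2
  · intro U hU hUY h0
    rw [toFinite_apply_eq_zero_iff, hν _ hU.measurableSet] at h0
    have hcov : ∀ y ∈ Y, ∃ g : G, g • y ∈ U := by
      by_contra! hcon
      obtain ⟨y, hy, hyU⟩ := hcon
      have h := hmin (Y ∩ ⋂ g : G, (fun x => g • x) ⁻¹' Uᶜ) ?_ ?_ ?_ inter_subset_left
      · obtain ⟨u, huU, huY⟩ := hUY
        rw [← h] at huY
        have := mem_iInter.1 huY.2 1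
        simp at this
        exact this huU
      · exact ⟨y, hy, mem_iInter.2 hyU⟩
      · exact hcl.inter (isClosed_iInter fun g => hU.isClosed_compl.preimage (hc g))
      · rintro g x ⟨hx, hx'⟩
        refine ⟨hinv g x hx, mem_iInter.2 fun k => ?_⟩
        have := mem_iInter.1 hx' (k * g)
        simpa [mul_smul] using this
    have : (volume : Measure ℝ) univ = 0 := by
      refine measure_mono_null ?_ (measure_iUnion_null h0)
      intro r _
      exact mem_iUnion.2 (hcov (q r) (e r).2)
    simp at this

/-- A bounded measurable section of the projection. -/
def sec (t : T1) : ℝ := (AddCircle.measurableEquivIoc (1 : ℝ) 0 t : ℝ)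

lemma measurable_sec : Measurable sec :=
  measurable_subtype_coe.comp (AddCircle.measurableEquivIoc (1 : ℝ) 0).measurable

lemma sec_mem (t : T1) : 0 < sec t ∧ sec t ≤ 1 := by
  have := (AddCircle.measurableEquivIoc (1 : ℝ) 0 t).2
  simpa [sec] using this

lemma coe_sec (t : T1) : ((sec t : ℝ) : T1) = t :=
  (AddCircle.measurableEquivIoc (1 : ℝ) 0).symm_apply_apply t

lemma coe_eq_iff (x y : ℝ) : ((x : T1) = (y : T1)) ↔ ∃ n : ℤ, y = x + n := by
  rw [eq_comm, ← sub_eq_zero, ← AddCircle.coe_sub, AddCircle.coe_eq_zero_iff]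
  constructor
  · rintro ⟨n, hn⟩
    exact ⟨n, by simp at hn; linarith⟩
  · rintro ⟨n, hn⟩
    exact ⟨n, by simp [hn]⟩

/-- The lift. -/
def lift (μ : Measure T1) (x : ℝ) : ℝ := ∫ t, ((⌊x - sec t⌋ : ℤ) : ℝ) ∂μ

lemma meas_floor (x : ℝ) : Measurable fun t : T1 => ((⌊x - sec t⌋ : ℤ) : ℝ) := by
  have : Measurable fun t : T1 => ⌊x - sec t⌋ := (measurable_const.sub measurable_sec).floor
  exact measurable_from_top.comp this

lemma bound_floor (x : ℝ) (t : T1) : ‖((⌊x - sec t⌋ : ℤ) : ℝ)‖ ≤ |x| + 2 := by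
  have h1 := Int.floor_le (x - sec t)
  have h2 := Int.lt_floor_add_one (x - sec t)
  have h3 := sec_mem t
  rw [Real.norm_eq_abs, abs_le]
  have := neg_abs_le x
  have := le_abs_self x
  constructor <;> linarith

lemma integrable_floor (μ : Measure T1) [IsProbabilityMeasure μ] (x : ℝ) :
    Integrable (fun t : T1 => ((⌊x - sec t⌋ : ℤ) : ℝ)) μ :=
  Integrable.of_bound (meas_floor x).aestronglyMeasurable (|x| + 2)
    (Eventually.of_forall (bound_floor x))

lemma lift_add_int (μ : Measure T1) [IsProbabilityMeasure μ] (x : ℝ) (n : ℤ) :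
    lift μ (x + n) = lift μ x + n := by
  have : ∀ t : T1, ((⌊x + n - sec t⌋ : ℤ) : ℝ) = ((⌊x - sec t⌋ : ℤ) : ℝ) + n := by
    intro t
    rw [add_sub_right_comm, Int.floor_add_intCast]
    push_cast
    rfl
  simp only [lift, this]
  rw [integral_add (integrable_floor μ x) (integrable_const _)]
  simp

lemma lift_mono (μ : Measure T1) [IsProbabilityMeasure μ] : Monotone (lift μ) := by
  intro a b hab
  refine integral_mono (integrable_floor μ a) (integrable_floor μ b) fun t => ?_
  exact Int.cast_le.2 (Int.floor_mono (sub_le_sub_right hab _))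

lemma lift_eq_iff (μ : Measure T1) [IsProbabilityMeasure μ] {a b : ℝ} (hab : a ≤ b) :
    lift μ a = lift μ b ↔ μ ((fun x : ℝ => (x : T1)) '' Ioc a b) = 0 := by
  have hfl : ∀ t : T1, ⌊a - sec t⌋ ≤ ⌊b - sec t⌋ := fun t =>
    Int.floor_mono (sub_le_sub_right hab _)
  have h1 : lift μ a = lift μ b ↔
      (fun t : T1 => ((⌊a - sec t⌋ : ℤ) : ℝ)) =ᵐ[μ] fun t => ((⌊b - sec t⌋ : ℤ) : ℝ) :=
    integral_eq_iff_of_ae_le (integrable_floor μ a) (integrable_floor μ b)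
      (Eventually.of_forall fun t => Int.cast_le.2 (hfl t))
  rw [h1, Filter.EventuallyEq, ae_iff]
  have : {t : T1 | ¬ ((⌊a - sec t⌋ : ℤ) : ℝ) = ((⌊b - sec t⌋ : ℤ) : ℝ)} =
      (fun x : ℝ => (x : T1)) '' Ioc a b := by
    ext t
    simp only [mem_ofPred_eq, Int.cast_inj, mem_image, mem_Ioc]
    constructor
    · intro h
      have hlt := lt_of_le_of_ne (hfl t) h
      refine ⟨sec t + ⌊b - sec t⌋, ⟨?_, ?_⟩, ?_⟩
      · have := Int.floor_lt.1 hlt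
        linarith
      · have := Int.floor_le (b - sec t)
        linarith
      · conv_rhs => rw [← coe_sec t]
        exact ((coe_eq_iff _ _).2 ⟨_, rfl⟩).symm
    · rintro ⟨x, ⟨hx1, hx2⟩, hxt⟩ heq
      rw [← coe_sec t] at hxt
      obtain ⟨n, hn⟩ := (coe_eq_iff _ _).1 hxt.symm
      have h2 : n ≤ ⌊b - sec t⌋ := Int.le_floor.2 (by linarith)
      have h3 : ⌊a - sec t⌋ < n := Int.floor_lt.2 (by linarith)
      omega
  rw [this]

lemma lift_continuous (μ : Measure T1) [IsProbabilityMeasure μ] (hat : ∀ t, μ {t} = 0) :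
    Continuous (lift μ) := by
  rw [continuous_iff_continuousAt]
  intro x₀
  refine MeasureTheory.continuousAt_of_dominated (bound := fun _ => |x₀| + 3) ?_ ?_
    (integrable_const _) ?_
  · exact Eventually.of_forall fun x => (meas_floor x).aestronglyMeasurable
  · have : ∀ᶠ x in 𝓝 x₀, |x| < |x₀| + 1 :=
      (continuous_abs.tendsto x₀).eventually_lt_const (by linarith)
    filter_upwards [this] with x hx
    exact Eventually.of_forall fun t => (bound_floor x t).trans (by linarith)
  · have : ∀ᵐ t ∂μ, t ≠ (x₀ : T1) := by
      rw [ae_iff]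
      simpa using hat (x₀ : T1)
    filter_upwards [this] with t ht
    have hlt : ((⌊x₀ - sec t⌋ : ℤ) : ℝ) < x₀ - sec t := by
      refine lt_of_le_of_ne (Int.floor_le _) fun h => ht ?_
      rw [← coe_sec t, coe_eq_iff]
      exact ⟨⌊x₀ - sec t⌋, by linarith⟩
    have hlt2 := Int.lt_floor_add_one (x₀ - sec t)
    have hev : ∀ᶠ x in 𝓝 x₀, ((⌊x - sec t⌋ : ℤ) : ℝ) = ((⌊x₀ - sec t⌋ : ℤ) : ℝ) := by
      have : Ioo (⌊x₀ - sec t⌋ + sec t) (⌊x₀ - sec t⌋ + 1 + sec t) ∈ 𝓝 x₀ :=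
        Ioo_mem_nhds (by linarith) (by linarith)
      filter_upwards [this] with x hx
      congr 1
      rw [Int.floor_eq_iff]
      constructor <;> linarith [hx.1, hx.2]
    exact continuousAt_const.congr (hev.mono fun x hx => hx.symm)

/-- The collapsing map. -/
def phi (μ : Measure T1) (t : T1) : T1 := ((lift μ (sec t) : ℝ) : T1)

lemma phi_coe (μ : Measure T1) [IsProbabilityMeasure μ] (x : ℝ) :
    ((lift μ x : ℝ) : T1) = phi μ (x : T1) := by
  obtain ⟨n, hn⟩ := (coe_eq_iff x (sec (x : T1))).1 (coe_sec _).symm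
  rw [phi, hn, lift_add_int, coe_eq_iff]
  exact ⟨n, rfl⟩

lemma phi_continuous (μ : Measure T1) [IsProbabilityMeasure μ] (hat : ∀ t, μ {t} = 0) :
    Continuous (phi μ) := by
  have hq : IsQuotientMap (fun x : ℝ => (x : T1)) := QuotientAddGroup.isQuotientMap_mk _
  rw [hq.continuous_iff]
  have : phi μ ∘ (fun x : ℝ => (x : T1)) = fun x => ((lift μ x : ℝ) : T1) := by
    ext x
    exact (phi_coe μ x).symm
  rw [this]
  exact (AddCircle.continuous_mk' (1 : ℝ)).comp (lift_continuous μ hat)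

lemma phi_surjective (μ : Measure T1) [IsProbabilityMeasure μ] (hat : ∀ t, μ {t} = 0) :
    Function.Surjective (phi μ) := by
  intro t
  have hadd := lift_add_int μ 0
  obtain ⟨n, hn⟩ := exists_int_lt (sec t - lift μ 0)
  obtain ⟨m, hm⟩ := exists_int_gt (sec t - lift μ 0)
  have h1 := hadd n
  have h2 := hadd m
  have hmem : sec t ∈ range (lift μ) :=
    mem_range_of_exists_le_of_exists_ge (lift_continuous μ hat)
      ⟨0 + n, by rw [h1]; linarith⟩ ⟨0 + m, by rw [h2]; linarith⟩
  obtain ⟨x, hx⟩ := hmem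
  exact ⟨(x : T1), by rw [← phi_coe, hx, coe_sec]⟩

lemma lift_eq_of_disjoint (μ : Measure T1) [IsProbabilityMeasure μ] (hat : ∀ t, μ {t} = 0)
    {Y : Set T1} (hYc : μ Yᶜ = 0) {a b : ℝ} (hab : a ≤ b)
    (h : ∀ x ∈ Ioo a b, (x : T1) ∉ Y) : lift μ a = lift μ b := by
  rw [lift_eq_iff μ hab]
  refine measure_mono_null (t := Yᶜ ∪ {(b : T1)}) ?_ (measure_union_null hYc (hat _))
  rintro _ ⟨x, hx, rfl⟩
  rcases hx.2.eq_or_lt with rfl | hlt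
  · exact Or.inr rfl
  · exact Or.inl (h x ⟨hx.1, hlt⟩)

lemma isOpenMap_coe : IsOpenMap (fun x : ℝ => (x : T1)) := QuotientAddGroup.isOpenMap_coe

lemma phi_const (μ : Measure T1) [IsProbabilityMeasure μ] (hat : ∀ t, μ {t} = 0)
    {Y : Set T1} (hcl : IsClosed Y) (hYc : μ Yᶜ = 0) {S : Set T1} (hS : IsPreconnected S)
    (hSY : S ⊆ Yᶜ) {x y : T1} (hx : x ∈ S) (hy : y ∈ S) : phi μ x = phi μ y := by
  have hloc : ∀ x ∉ Y, ∀ᶠ y in 𝓝 x, phi μ y = phi μ x := by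
    intro x hx
    have hop : IsOpen {r : ℝ | (r : T1) ∉ Y} :=
      hcl.isOpen_compl.preimage (AddCircle.continuous_mk' (1 : ℝ))
    have hxm : sec x ∈ {r : ℝ | (r : T1) ∉ Y} := by simpa [coe_sec] using hx
    obtain ⟨ε, hε, hball⟩ := Metric.isOpen_iff.1 hop _ hxm
    rw [Real.ball_eq_Ioo] at hball
    have hnh : (fun x : ℝ => (x : T1)) '' Ioo (sec x - ε) (sec x + ε) ∈ 𝓝 x := by
      refine (isOpenMap_coe _ isOpen_Ioo).mem_nhds ⟨sec x, ⟨by linarith, by linarith⟩, coe_sec x⟩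
    filter_upwards [hnh] with y hy
    obtain ⟨r, hr, rfl⟩ := hy
    rw [← phi_coe, phi]
    congr 1
    rcases le_total r (sec x) with h | h
    · exact lift_eq_of_disjoint μ hat hYc h fun z hz =>
        hball ⟨by linarith [hr.1, hz.1], by linarith [hz.2]⟩
    · exact (lift_eq_of_disjoint μ hat hYc h fun z hz =>
        hball ⟨by linarith [hz.1], by linarith [hr.2, hz.2]⟩).symm
  have : PreconnectedSpace S := Subtype.preconnectedSpace hS
  have hlc : IsLocallyConstant (fun s : S => phi μ s) := by
    rw [IsLocallyConstant.iff_eventually_eq]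
    intro s
    exact continuous_subtype_val.continuousAt.eventually (hloc s (hSY s.2))
  exact hlc.apply_eq_of_preconnectedSpace ⟨x, hx⟩ ⟨y, hy⟩

lemma const_closure {f : T1 → T1} (hf : Continuous f) {S : Set T1} {z : T1}
    (h : ∀ x ∈ S, f x = f z) {x : T1} (hx : x ∈ closure S) : f x = f z := by
  have hc : IsClosed {x | f x = f z} := isClosed_eq hf continuous_const
  exact closure_minimal h hc hx

lemma phi_fiber (μ : Measure T1) [IsProbabilityMeasure μ] (hat : ∀ t, μ {t} = 0)
    {Y : Set T1} (hcl : IsClosed Y) (hYc : μ Yᶜ = 0)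
    (hsupp : ∀ U : Set T1, IsOpen U → (U ∩ Y).Nonempty → μ U ≠ 0) (x y : T1) :
    (x = y ∨ ∃ z ∈ Yᶜ, x ∈ closure (connectedComponentIn Yᶜ z) ∧
          y ∈ closure (connectedComponentIn Yᶜ z)) ↔ phi μ x = phi μ y := by
  constructor
  · rintro (rfl | ⟨z, hz, hx, hy⟩)
    · rfl
    · have : ∀ w ∈ connectedComponentIn Yᶜ z, phi μ w = phi μ z := fun w hw =>
        phi_const μ hat hcl hYc isPreconnected_connectedComponentIn
          (connectedComponentIn_subset _ _) hw (mem_connectedComponentIn hz)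
      rw [const_closure (phi_continuous μ hat) this hx,
        const_closure (phi_continuous μ hat) this hy]
  · have key : ∀ a b : ℝ, a < b → lift μ a = lift μ b → ∃ z ∈ Yᶜ,
        (a : T1) ∈ closure (connectedComponentIn Yᶜ z) ∧
          (b : T1) ∈ closure (connectedComponentIn Yᶜ z) := by
      intro a b hab h
      rw [lift_eq_iff μ hab.le] at h
      have hsub : (fun x : ℝ => (x : T1)) '' Ioo a b ⊆ Yᶜ := by
        intro t ht htY
        refine hsupp _ (isOpenMap_coe _ isOpen_Ioo) ⟨t, ht, htY⟩ ?_
        exact measure_mono_null (image_mono Ioo_subset_Ioc_self) h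
      have hcont : Continuous (fun x : ℝ => (x : T1)) := AddCircle.continuous_mk' (1 : ℝ)
      have hm : (((a + b) / 2 : ℝ) : T1) ∈ (fun x : ℝ => (x : T1)) '' Ioo a b :=
        ⟨(a + b) / 2, ⟨by linarith, by linarith⟩, rfl⟩
      have hpc : IsPreconnected ((fun x : ℝ => (x : T1)) '' Ioo a b) :=
        isPreconnected_Ioo.image _ hcont.continuousOn
      have hsc := hpc.subset_connectedComponentIn hm hsub
      have hcl2 : ∀ r ∈ Icc a b, (r : T1) ∈ closure (connectedComponentIn Yᶜ
          (((a + b) / 2 : ℝ) : T1)) := by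
        intro r hr
        refine closure_mono hsc ?_
        refine image_closure_subset_closure_image hcont ⟨r, ?_, rfl⟩
        rw [closure_Ioo hab.ne]
        exact hr
      exact ⟨_, hsub hm, hcl2 a ⟨le_rfl, hab.le⟩, hcl2 b ⟨hab.le, le_rfl⟩⟩
    intro h
    rw [phi, phi, coe_eq_iff] at h
    obtain ⟨n, hn⟩ := h
    rw [← lift_add_int] at hn
    have hx : ((sec x + n : ℝ) : T1) = x := by
      conv_rhs => rw [← coe_sec x]
      exact ((coe_eq_iff _ _).2 ⟨_, rfl⟩).symm
    have hy := coe_sec y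
    rcases lt_trichotomy (sec x + n) (sec y) with hlt | heq | hgt
    · obtain ⟨z, hz, h1, h2⟩ := key _ _ hlt hn.symm
      rw [hx] at h1
      rw [hy] at h2
      exact Or.inr ⟨z, hz, h1, h2⟩
    · left
      rw [← hx, heq, hy]
    · obtain ⟨z, hz, h1, h2⟩ := key _ _ hgt hn
      rw [hx] at h2
      rw [hy] at h1
      exact Or.inr ⟨z, hz, h2, h1⟩

lemma phi_surj_on (μ : Measure T1) [IsProbabilityMeasure μ] (hat : ∀ t, μ {t} = 0)
    {Y : Set T1} (hcl : IsClosed Y) (hne : Y.Nonempty) (hYc : μ Yᶜ = 0) (x : T1) :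
    ∃ y ∈ Y, phi μ y = phi μ x := by
  let A : Set ℝ := {r : ℝ | (r : T1) ∈ Y} ∩ Iic (sec x)
  have hA : IsClosed A :=
    (hcl.preimage (AddCircle.continuous_mk' (1 : ℝ))).inter isClosed_Iic
  have hAne : A.Nonempty := by
    obtain ⟨y, hy⟩ := hne
    refine ⟨sec y + (-1 : ℤ), ?_, ?_⟩
    · have : (((sec y + (-1 : ℤ)) : ℝ) : T1) = y := by
        conv_rhs => rw [← coe_sec y]
        exact ((coe_eq_iff _ _).2 ⟨_, rfl⟩).symm
      rw [mem_ofPred_eq, this]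
      exact hy
    · have := sec_mem x
      have := sec_mem y
      simp only [mem_Iic]
      push_cast
      linarith
  have hAb : BddAbove A := ⟨sec x, fun r hr => hr.2⟩
  have hs := hA.csSup_mem hAne hAb
  refine ⟨((sSup A : ℝ) : T1), hs.1, ?_⟩
  rw [← phi_coe, phi]
  congr 1
  refine lift_eq_of_disjoint μ hat hYc hs.2 fun r hr hrY => ?_
  exact absurd (le_csSup hAb ⟨hrY, hr.2.le⟩) (not_le.2 hr.1)

end DenjoyAux

open DenjoyAux

/-- collapsing the closures of the complementary intervals of the
unique minimal set `Y` of a Denjoy action yields an equivalence relation whose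
quotient is the circle (via a monotone degree-one quotient map `φ` whose fibres are
exactly the equivalence classes), and the action descends along `φ` to a minimal
action on the quotient circle. -/
theorem statement5 (G : Type*) [Group G] [Countable G] [Infinite G] [MulAction G T1]
    (hD : IsDenjoy G) (Y : Set T1) (hY : IsMinimalSet G Y)
    (hYuniq : ∀ Z : Set T1, IsMinimalSet G Z → Z = Y) (hYproper : Y ≠ Set.univ) :
    Equivalence (fun x y : T1 => x = y ∨ ∃ z ∈ Yᶜ,
        x ∈ closure (connectedComponentIn Yᶜ z) ∧
        y ∈ closure (connectedComponentIn Yᶜ z)) ∧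
    ∃ (φ : T1 → T1) (β : G → T1 → T1),
      Topology.IsQuotientMap φ ∧
      MonotoneDegreeOne φ ∧
      (∀ x y : T1, (x = y ∨ ∃ z ∈ Yᶜ,
          x ∈ closure (connectedComponentIn Yᶜ z) ∧
          y ∈ closure (connectedComponentIn Yᶜ z)) ↔ φ x = φ y) ∧
      (∀ x : T1, β 1 x = x) ∧
      (∀ (g h : G) (x : T1), β (g * h) x = β g (β h x)) ∧
      (∀ g : G, Continuous (β g)) ∧
      (∀ (g : G) (x : T1), φ (g • x) = β g (φ x)) ∧
      (∀ Z : Set T1, Z.Nonempty → IsClosed Z →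
        (∀ g : G, ∀ x ∈ Z, β g x ∈ Z) → Z = Set.univ) := by
  have hc := hD.1.1
  have hP := perfect_of_minimal hc hD.2.2 Y hY
  obtain ⟨μ, hμ, hat, hYc, hsupp⟩ := exists_measure hc Y hY hP
  obtain ⟨hne, hcl, hinv, hmin⟩ := hY
  have hfib := phi_fiber μ hat hcl hYc hsupp
  have hcont := phi_continuous μ hat
  have hsurj := phi_surjective μ hat
  have hquot : Topology.IsQuotientMap (phi μ) :=
    Topology.IsQuotientMap.of_surjective_continuous hsurj hcont
  have hdesc : ∀ (g : G) (x y : T1), phi μ x = phi μ y → phi μ (g • x) = phi μ (g • y) := by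
    intro g x y hxy
    rcases (hfib x y).2 hxy with rfl | ⟨z, hz, hx, hy⟩
    · rfl
    · have hf : Continuous fun w : T1 => phi μ (g • w) := hcont.comp (hc g)
      have hconst : ∀ w ∈ connectedComponentIn Yᶜ z, phi μ (g • w) = phi μ (g • z) := by
        intro w hw
        refine phi_const μ hat hcl hYc
          (isPreconnected_connectedComponentIn.image _ (hc g).continuousOn) ?_
          ⟨w, hw, rfl⟩ ⟨z, mem_connectedComponentIn hz, rfl⟩
        rintro _ ⟨v, hv, rfl⟩ hvY
        refine connectedComponentIn_subset _ _ hv ?_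
        simpa using hinv g⁻¹ _ hvY
      exact (const_closure hf hconst hx).trans (const_closure hf hconst hy).symm
  let β : G → T1 → T1 := fun g t => phi μ (g • Function.surjInv hsurj t)
  have hβ : ∀ (g : G) (x : T1), phi μ (g • x) = β g (phi μ x) := fun g x =>
    hdesc g _ _ (Function.surjInv_eq hsurj _).symm
  refine ⟨⟨fun x => Or.inl rfl, fun {x y} h => ?_, fun {x y z} h1 h2 => ?_⟩, phi μ, β, hquot,
    ⟨hcont, hsurj, lift μ, lift_mono μ, fun x => ?_, phi_coe μ⟩, hfib, ?_, ?_, ?_, hβ, ?_⟩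
  · exact (hfib _ _).2 ((hfib _ _).1 h).symm
  · exact (hfib _ _).2 (((hfib _ _).1 h1).trans ((hfib _ _).1 h2))
  · simpa using lift_add_int μ x 1
  · intro t
    obtain ⟨x, rfl⟩ := hsurj t
    rw [← hβ, one_smul]
  · intro g h t
    obtain ⟨x, rfl⟩ := hsurj t
    rw [← hβ h x, ← hβ g (h • x), ← hβ (g * h) x, mul_smul]
  · intro g
    rw [hquot.continuous_iff]
    have : β g ∘ phi μ = fun x => phi μ (g • x) := by
      funext x
      exact (hβ g x).symm
    rw [this]
    exact hcont.comp (hc g)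
  · intro Z hZne hZcl hZinv
    have h := hmin (Y ∩ phi μ ⁻¹' Z) ?_ (hcl.inter (hZcl.preimage hcont)) ?_ inter_subset_left
    · refine eq_univ_of_forall fun t => ?_
      obtain ⟨x, rfl⟩ := hsurj t
      obtain ⟨y, hy, hyx⟩ := phi_surj_on μ hat hcl hne hYc x
      rw [← h] at hy
      rw [← hyx]
      exact hy.2
    · obtain ⟨t, ht⟩ := hZne
      obtain ⟨x, rfl⟩ := hsurj t
      obtain ⟨y, hy, hyx⟩ := phi_surj_on μ hat hcl hne hYc x
      exact ⟨y, hy, by rw [mem_preimage, hyx]; exact ht⟩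
    · rintro g x ⟨hx, hxZ⟩
      refine ⟨hinv g x hx, ?_⟩
      rw [mem_preimage, hβ]
      exact hZinv g _ hxZ
end
end

section
/- Every free action of a countably infinite discrete abelian group G on the circle 𝕋 is uniquely ergodic: there is exactly one G-invariant regular Borel probability measure on 𝕋. -/
open MeasureTheory Topology Filter Set Function

noncomputable section

variable (G : Type*) [Group G] [MulAction G T1]

theorem aux_coe_eq {x y : ℝ} (h : (x : T1) = (y : T1)) : ∃ n : ℤ, x = y + n := by
  have : ((x - y : ℝ) : T1) = 0 := by
    rw [AddCircle.coe_sub, h, sub_self]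
  obtain ⟨n, hn⟩ := (AddCircle.coe_eq_zero_iff (1:ℝ)).1 this
  refine ⟨n, ?_⟩
  simp at hn
  linarith

theorem aux_coe_int (x : ℝ) (n : ℤ) : ((x + n : ℝ) : T1) = (x : T1) := by
  rw [AddCircle.coe_add]
  have : ((n : ℝ) : T1) = 0 := (AddCircle.coe_eq_zero_iff (1:ℝ)).2 ⟨n, by simp⟩
  rw [this, add_zero]

theorem aux_lift_unique {F K : ℝ → ℝ} (hF : Continuous F) (hK : Continuous K)
    (h : ∀ x, (F x : T1) = (K x : T1)) : ∃ n : ℤ, ∀ x, F x = K x + n := by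
  obtain ⟨n, hn⟩ := aux_coe_eq (h 0)
  refine ⟨n, fun x => ?_⟩
  have := (AddCircle.isCoveringMap_coe (1:ℝ)).eq_of_comp_eq (g₁ := F) (g₂ := fun x => K x + n)
    hF (by fun_prop) (by funext y; simp only [Function.comp]; rw [h]; exact (aux_coe_int _ _).symm) 0 hn
  exact congrFun this x

theorem aux_exists_lift {f : T1 → T1} (hf : Continuous f) :
    ∃ F : ℝ → ℝ, Continuous F ∧ ∀ x : ℝ, (F x : T1) = f x := by
  obtain ⟨e, he⟩ := QuotientAddGroup.mk_surjective (f ((0:ℝ) : T1))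
  obtain ⟨F, ⟨h0, h1⟩, -⟩ := (AddCircle.isCoveringMap_coe (1:ℝ)).existsUnique_continuousMap_lifts
    ⟨fun x : ℝ => f (x : T1), hf.comp (AddCircle.continuous_mk' 1)⟩ 0 e he
  exact ⟨F, F.continuous, fun x => congrFun h1 x⟩

theorem aux_deg {f : T1 → T1} {F : ℝ → ℝ} (hF : Continuous F) (hl : ∀ x : ℝ, (F x : T1) = f x) :
    ∃ k : ℤ, ∀ x, F (x + 1) = F x + k := by
  refine aux_lift_unique (F := fun x => F (x + 1)) (by fun_prop) hF fun x => ?_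
  rw [hl, hl]
  have := aux_coe_int x 1
  push_cast at this
  rw [this]

theorem aux_unit_lift {f f' : T1 → T1} (hf : Continuous f) (hf' : Continuous f')
    (h1 : ∀ x, f (f' x) = x) (h2 : ∀ x, f' (f x) = x)
    (hfix : ∀ x, f x = x → ∀ y, f y = y) :
    ∃ u : CircleDeg1Liftˣ, ∀ x : ℝ, ((u x : ℝ) : T1) = f x := by
  obtain ⟨F, hF, hFl⟩ := aux_exists_lift hf
  obtain ⟨K, hK, hKl⟩ := aux_exists_lift hf'
  obtain ⟨k, hk⟩ := aux_deg hF hFl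
  obtain ⟨n, hn⟩ := aux_lift_unique (F := fun x => F (K x)) (K := id) (by fun_prop) continuous_id
    (fun x => by simp [hFl, hKl, h1])
  obtain ⟨m, hm⟩ := aux_lift_unique (F := fun x => K (F x)) (K := id) (by fun_prop) continuous_id
    (fun x => by simp [hFl, hKl, h2])
  simp only [id] at hn hm
  have hinj : Injective F := fun x y h => by
    have := hm x; rw [h, hm y] at this; linarith
  have hsurj : Surjective F := fun y => ⟨K (y - n), by rw [hn]; ring⟩
  have hmono : StrictMono F := by
    rcases hF.strictMono_of_inj hinj with h | h
    · exact h
    exfalso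
    obtain ⟨x, hx⟩ : ∃ x, F x - x = 0 := by
      have hc : Continuous fun x => F x - x := by fun_prop
      rcases le_total 0 (F 0) with h0 | h0
      · have := h.antitone h0
        exact mem_range_of_exists_le_of_exists_ge hc ⟨F 0, by linarith⟩ ⟨0, by linarith⟩
      · have := h.antitone h0
        exact mem_range_of_exists_le_of_exists_ge hc ⟨0, by linarith⟩ ⟨F 0, by linarith⟩
    have hid := hfix x (by rw [← hFl]; congr 1; linarith)
    obtain ⟨p, hp⟩ := aux_lift_unique hF continuous_id (fun x => by rw [hFl, hid]; rfl)
    have := h (zero_lt_one' ℝ)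
    rw [hp, hp] at this
    simp at this
    linarith
  have hk1 : k = 1 := by
    have hpos : 0 < k := by
      have := hmono (show (0:ℝ) < 0 + 1 by norm_num)
      rw [hk] at this
      have : (0:ℝ) < k := by linarith
      exact_mod_cast this
    by_contra hne
    have h2k : (2:ℝ) ≤ k := by exact_mod_cast (by omega : (2:ℤ) ≤ k)
    obtain ⟨x, hx⟩ := hsurj (F 0 + 1)
    have hx0 : 0 < x := hmono.lt_iff_lt.1 (by linarith)
    have hx1 : x < 0 + 1 := hmono.lt_iff_lt.1 (by rw [hk]; linarith)
    have e : ((x : ℝ) : T1) = ((0:ℝ) : T1) := by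
      rw [← h2 (x : T1), ← h2 ((0:ℝ) : T1), ← hFl, ← hFl, hx]
      have := aux_coe_int (F 0) 1
      push_cast at this
      rw [this]
    obtain ⟨q, hq⟩ := aux_coe_eq e
    have a1 : (0:ℝ) < q := by linarith
    have a2 : (q:ℝ) < 1 := by linarith
    norm_cast at a1 a2
    omega
  let D : CircleDeg1Lift := ⟨⟨F, hmono.monotone⟩, fun x => by simp [hk, hk1]⟩
  have hD : IsUnit D := CircleDeg1Lift.isUnit_iff_bijective.2 ⟨hinj, hsurj⟩
  obtain ⟨u, hu⟩ := hD
  exact ⟨u, fun x => by rw [hu]; exact hFl x⟩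

def auxSec (x : T1) : ℝ := (AddCircle.measurableEquivIco (1:ℝ) 0 x : ℝ)

theorem auxSec_meas : Measurable auxSec :=
  measurable_subtype_coe.comp (AddCircle.measurableEquivIco (1:ℝ) 0).measurable

theorem auxSec_coe (x : T1) : ((auxSec x : ℝ) : T1) = x :=
  (AddCircle.equivIco (1:ℝ) 0).symm_apply_apply x

theorem auxSec_nonneg (x : T1) : 0 ≤ auxSec x := (AddCircle.measurableEquivIco (1:ℝ) 0 x).2.1

theorem auxSec_lt (x : T1) : auxSec x < 1 := by
  have := (AddCircle.measurableEquivIco (1:ℝ) 0 x).2.2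
  exact this.trans_eq (zero_add 1)

/-- The group of all lifts of elements of the action. -/
def auxLifts (Γ : Type*) [CommGroup Γ] [MulAction Γ T1] : Subgroup CircleDeg1Liftˣ where
  carrier := {u | ∃ g : Γ, ∀ x : ℝ, ((u x : ℝ) : T1) = g • (x : T1)}
  mul_mem' := by
    rintro u v ⟨g, hg⟩ ⟨h, hh⟩
    refine ⟨g * h, fun x => ?_⟩
    rw [Units.val_mul, CircleDeg1Lift.mul_apply, hg, hh, mul_smul]
  one_mem' := ⟨1, fun x => by simp⟩
  inv_mem' := by
    rintro u ⟨g, hg⟩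
    refine ⟨g⁻¹, fun x => ?_⟩
    rw [eq_inv_smul_iff, ← hg, CircleDeg1Lift.units_apply_inv_apply]

theorem aux_cont (u : CircleDeg1Liftˣ) : Continuous (u : ℝ → ℝ) := by
  rw [← CircleDeg1Lift.coe_toOrderIso]
  exact (CircleDeg1Lift.toOrderIso u).continuous

theorem aux_strictMono (u : CircleDeg1Liftˣ) : StrictMono (u : ℝ → ℝ) := by
  rw [← CircleDeg1Lift.coe_toOrderIso]
  exact (CircleDeg1Lift.toOrderIso u).strictMono

theorem aux_commute {Γ : Type*} [CommGroup Γ] [MulAction Γ T1] {u v : CircleDeg1Liftˣ}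
    (hu : u ∈ auxLifts Γ) (hv : v ∈ auxLifts Γ) : Commute u v := by
  obtain ⟨g, hg⟩ := hu
  obtain ⟨h, hh⟩ := hv
  obtain ⟨n, hn⟩ := aux_lift_unique (F := fun x => u (v x)) (K := fun x => v (u x))
    ((aux_cont u).comp (aux_cont v)) ((aux_cont v).comp (aux_cont u))
    (fun x => by rw [hg, hh, hh, hg, smul_smul, smul_smul, mul_comm])
  let t : CircleDeg1Liftˣ := CircleDeg1Lift.translate (Multiplicative.ofAdd (n : ℝ))
  have e : u * v = t * v * u := by
    ext x
    simp only [Units.val_mul, CircleDeg1Lift.mul_apply]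
    rw [hn, CircleDeg1Lift.translate_apply, add_comm]
  have e2 : u * v * u⁻¹ = t * v := by rw [e]; group
  have c : Commute (t : CircleDeg1Lift) (v : CircleDeg1Lift) := by
    ext x
    simp only [CircleDeg1Lift.mul_apply, t, CircleDeg1Lift.translate_apply,
      CircleDeg1Lift.map_int_add]
  have h1 := CircleDeg1Lift.translationNumber_conj_eq u (v : CircleDeg1Lift)
  rw [← Units.val_mul, ← Units.val_mul, e2, Units.val_mul,
    CircleDeg1Lift.translationNumber_mul_of_commute c,
    CircleDeg1Lift.translationNumber_translate] at h1
  have hn0 : (n : ℝ) = 0 := by linarith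
  have ht : t = 1 := by simp [t, hn0]
  rw [ht, one_mul] at e
  exact e

/-- Translation number as a homomorphism. -/
def auxTau (Γ : Type*) [CommGroup Γ] [MulAction Γ T1] : auxLifts Γ →* Multiplicative ℝ where
  toFun u := Multiplicative.ofAdd (CircleDeg1Lift.translationNumber (u : CircleDeg1Liftˣ))
  map_one' := by simp
  map_mul' u v := by
    have c : Commute (u.1 : CircleDeg1Lift) (v.1 : CircleDeg1Lift) := by
      have := aux_commute u.2 v.2
      exact congrArg Units.val this
    rw [← ofAdd_add, ← CircleDeg1Lift.translationNumber_mul_of_commute c]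
    rfl

theorem aux_exists_mem {Γ : Type*} [CommGroup Γ] [MulAction Γ T1]
    (hcont : ∀ g : Γ, Continuous fun x : T1 => g • x)
    (hfree : ∀ (g : Γ) (x : T1), g • x = x → g = 1) (g : Γ) :
    ∃ u ∈ auxLifts Γ, ∀ x : ℝ, ((u x : ℝ) : T1) = g • (x : T1) := by
  obtain ⟨u, hu⟩ := aux_unit_lift (hcont g) (hcont g⁻¹) (by simp) (by simp)
    (fun x hx y => by rw [hfree g x hx, one_smul])
  exact ⟨u, ⟨g, hu⟩, hu⟩

theorem aux_exists_measure {Γ : Type*} [CommGroup Γ] [MulAction Γ T1]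
    (hcont : ∀ g : Γ, Continuous fun x : T1 => g • x)
    (hfree : ∀ (g : Γ) (x : T1), g • x = x → g = 1) :
    ∃ μ : Measure T1, IsProbabilityMeasure μ ∧ μ.Regular ∧
      ∀ g : Γ, Measure.map (fun x : T1 => g • x) μ = μ := by
  let f₁ : auxLifts Γ →* CircleDeg1Lift :=
    (Units.coeHom _).comp (CircleDeg1Lift.translate.comp (auxTau Γ))
  let f₂ : auxLifts Γ →* CircleDeg1Lift := (Units.coeHom _).comp (auxLifts Γ).subtype
  obtain ⟨K, hK⟩ := CircleDeg1Lift.semiconj_of_group_action_of_forall_translationNumber_eq f₁ f₂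
    (fun u => CircleDeg1Lift.translationNumber_translate _)
  have hKm : Measurable K := K.monotone.measurable
  let k : T1 → T1 := fun x => ((K (auxSec x) : ℝ) : T1)
  have hk : Measurable k := AddCircle.measurable_mk'.comp (hKm.comp auxSec_meas)
  have : IsProbabilityMeasure (volume : Measure T1) := ⟨UnitAddCircle.measure_univ⟩
  have hprob : IsProbabilityMeasure (Measure.map k volume) :=
    Measure.isProbabilityMeasure_map hk.aemeasurable
  refine ⟨Measure.map k volume, hprob, inferInstance, fun g => ?_⟩
  obtain ⟨u, hu, hug⟩ := aux_exists_mem hcont hfree g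
  let t : ℝ := CircleDeg1Lift.translationNumber u
  have key : (fun x : T1 => g • x) ∘ k = k ∘ (fun x => (t : T1) + x) := by
    funext x
    simp only [Function.comp, k]
    have h1 : K (t + auxSec x) = u (K (auxSec x)) := hK ⟨u, hu⟩ (auxSec x)
    rw [← hug, ← h1]
    obtain ⟨n, hn⟩ := aux_coe_eq (x := auxSec ((t : T1) + x)) (y := t + auxSec x)
      (by rw [auxSec_coe, AddCircle.coe_add, auxSec_coe])
    rw [hn, CircleDeg1Lift.map_add_int, aux_coe_int]
  rw [Measure.map_map (hcont g).measurable hk, key,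
    ← Measure.map_map hk (measurable_const_add _), map_add_left_eq_self]

theorem aux_dense (Γ : Type*) [CommGroup Γ] [Infinite Γ] [MulAction Γ T1]
    (hcont : ∀ g : Γ, Continuous fun x : T1 => g • x)
    (hfree : ∀ (g : Γ) (x : T1), g • x = x → g = 1) (a b : ℝ) (hab : a < b) :
    ∃ u ∈ auxLifts Γ, a < CircleDeg1Lift.translationNumber u ∧
      CircleDeg1Lift.translationNumber u < b := by
  let S : AddSubgroup ℝ := (MonoidHom.toAdditiveLeft (auxTau Γ)).range
  have hS : ∀ t, t ∈ S ↔ ∃ u ∈ auxLifts Γ, CircleDeg1Lift.translationNumber u = t := by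
    intro t
    constructor
    · rintro ⟨u, hu⟩
      exact ⟨(Additive.toMul u).1, (Additive.toMul u).2, hu⟩
    · rintro ⟨u, hu, rfl⟩
      exact ⟨Additive.ofMul ⟨u, hu⟩, rfl⟩
  rcases S.dense_or_cyclic with hd | ⟨c, hc⟩
  · obtain ⟨t, htS, ht⟩ := hd.exists_between hab
    obtain ⟨u, hu, rfl⟩ := (hS t).1 htS
    exact ⟨u, hu, ht⟩
  exfalso
  have hmem : ∀ t, t ∈ S → ∃ n : ℤ, t = n * c := by
    intro t ht
    rw [hc, AddSubgroup.mem_closure_singleton] at ht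
    obtain ⟨n, hn⟩ := ht
    exact ⟨n, by rw [← hn, zsmul_eq_mul]⟩
  have h1S : (1:ℝ) ∈ S := by
    refine (hS 1).2 ⟨CircleDeg1Lift.translate (Multiplicative.ofAdd 1), ⟨1, fun x => ?_⟩, ?_⟩
    · rw [CircleDeg1Lift.translate_apply, one_smul, add_comm]
      simp
    · exact CircleDeg1Lift.translationNumber_translate 1
  obtain ⟨n, hn⟩ := hmem 1 h1S
  have hn0 : n ≠ 0 := by
    rintro rfl
    simp at hn
  choose u hu hug using aux_exists_mem hcont hfree
  choose k hk using fun g : Γ => hmem _ ((hS _).2 ⟨u g, hu g, rfl⟩)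
  have : NeZero n.natAbs := ⟨Int.natAbs_ne_zero.2 hn0⟩
  have hinj : Injective fun g : Γ => ((k g : ℤ) : ZMod n.natAbs) := by
    intro g h hgh
    have hd := (ZMod.intCast_eq_intCast_iff_dvd_sub _ _ _).1 hgh.symm
    rw [Int.natAbs_dvd] at hd
    obtain ⟨q, hq⟩ := hd
    have hv : u g * (u h)⁻¹ ∈ auxLifts Γ := mul_mem (hu g) (inv_mem (hu h))
    have ht : CircleDeg1Lift.translationNumber (u g * (u h)⁻¹ : CircleDeg1Liftˣ) = (q : ℝ) := by
      have cc := aux_commute (hu g) (inv_mem (hu h))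
      have c' : Commute (u g : CircleDeg1Lift) ((u h)⁻¹ : CircleDeg1Liftˣ) := congrArg Units.val cc
      rw [Units.val_mul, CircleDeg1Lift.translationNumber_mul_of_commute c',
        CircleDeg1Lift.translationNumber_units_inv, hk, hk]
      have : (k g : ℝ) - k h = n * q := by exact_mod_cast hq
      calc (k g : ℝ) * c + -(k h * c) = (k g - k h) * c := by ring
        _ = q * (n * c) := by rw [this]; ring
        _ = q := by rw [← hn, mul_one]
    obtain ⟨x, hx⟩ := (CircleDeg1Lift.translationNumber_eq_int_iff _ (aux_cont _)).1 ht
    have h3 : g • h⁻¹ • (x : T1) = x := by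
      refine Eq.trans ?_ (aux_coe_int x q)
      rw [← hx, Units.val_mul, CircleDeg1Lift.mul_apply, hug]
      congr 1
      rw [inv_smul_eq_iff, ← hug, CircleDeg1Lift.units_apply_inv_apply]
    rw [smul_smul] at h3
    exact mul_inv_eq_one.1 (hfree _ _ h3)
  exact (Finite.of_injective _ hinj).false

theorem aux_compare {P : CircleDeg1Liftˣ → Prop}
    (hd : ∀ a b : ℝ, a < b → ∃ u, P u ∧ a < CircleDeg1Lift.translationNumber u ∧
      CircleDeg1Lift.translationNumber u < b)
    {H₁ H₂ : ℝ → ℝ} (m₁ : Monotone H₁) (m₂ : Monotone H₂)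
    (h₁ : ∀ u, P u → ∀ x, H₁ (u x) = H₁ x + CircleDeg1Lift.translationNumber u)
    (h₂ : ∀ u, P u → ∀ x, H₂ (u x) = H₂ x + CircleDeg1Lift.translationNumber u) (x y : ℝ) :
    H₁ x - H₂ x ≤ H₁ y - H₂ y := by
  refine le_of_forall_pos_le_add fun ε hε => ?_
  obtain ⟨u, hu, ha, hb⟩ := hd (H₁ y - H₁ x) (H₁ y - H₁ x + ε) (by linarith)
  have hy : y < u x := by
    by_contra hle
    have := m₁ (not_lt.1 hle)
    rw [h₁ u hu] at this
    linarith
  have := m₂ hy.le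
  rw [h₂ u hu] at this
  linarith

theorem aux_floor_meas (b : ℝ) : Measurable fun x : T1 => ((⌊b - auxSec x⌋ : ℤ) : ℝ) :=
  (measurable_from_top (f := fun n : ℤ => (n : ℝ))).comp
    (Int.measurable_floor.comp (measurable_const.sub auxSec_meas))

theorem aux_floor_int (μ : Measure T1) [IsProbabilityMeasure μ] (b : ℝ) :
    Integrable (fun x : T1 => ((⌊b - auxSec x⌋ : ℤ) : ℝ)) μ := by
  refine Integrable.of_bound (aux_floor_meas b).aestronglyMeasurable (|b| + 2)
    (Eventually.of_forall fun x => ?_)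
  rw [Real.norm_eq_abs, abs_le]
  have h1 := Int.floor_le (b - auxSec x)
  have h2 := Int.lt_floor_add_one (b - auxSec x)
  have h3 := auxSec_nonneg x
  have h4 := auxSec_lt x
  have h5 := neg_abs_le b
  have h6 := le_abs_self b
  constructor <;> linarith

/-- The lifted distribution function of a measure on the circle. -/
def auxH (μ : Measure T1) [IsProbabilityMeasure μ] : CircleDeg1Lift where
  toFun b := ∫ x, ((⌊b - auxSec x⌋ : ℤ) : ℝ) ∂μ
  monotone' := by
    intro a b hab
    refine integral_mono (aux_floor_int μ a) (aux_floor_int μ b) fun x => ?_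
    have : ⌊a - auxSec x⌋ ≤ ⌊b - auxSec x⌋ := Int.floor_mono (by linarith)
    exact Int.cast_le.2 this
  map_add_one' := by
    intro b
    have : ∀ x : T1, ((⌊b + 1 - auxSec x⌋ : ℤ) : ℝ) = (⌊b - auxSec x⌋ : ℤ) + 1 := by
      intro x
      rw [show b + 1 - auxSec x = b - auxSec x + 1 by ring, Int.floor_add_one]
      push_cast
      rfl
    simp only [this]
    rw [integral_add (aux_floor_int μ b) (integrable_const _)]
    simp

theorem auxH_apply (μ : Measure T1) [IsProbabilityMeasure μ] (b : ℝ) :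
    auxH μ b = ∫ x, ((⌊b - auxSec x⌋ : ℤ) : ℝ) ∂μ := rfl

theorem aux_floor_map (u : CircleDeg1Liftˣ) (b t : ℝ) : ⌊u b - u t⌋ = ⌊b - t⌋ := by
  refine eq_of_forall_le_iff fun n => ?_
  rw [Int.le_floor, Int.le_floor, le_sub_iff_add_le, le_sub_iff_add_le,
    ← CircleDeg1Lift.map_int_add, (aux_strictMono u).le_iff_le]

theorem auxH_diff (μ : Measure T1) [IsProbabilityMeasure μ] (u : CircleDeg1Liftˣ) (f : T1 → T1)
    (hf : Measurable f) (hinv : Measure.map f μ = μ) (hu : ∀ x : ℝ, ((u x : ℝ) : T1) = f x)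
    (a b : ℝ) : auxH μ (u b) - auxH μ (u a) = auxH μ b - auxH μ a := by
  simp only [auxH_apply]
  rw [← integral_sub (aux_floor_int μ _) (aux_floor_int μ _),
    ← integral_sub (aux_floor_int μ _) (aux_floor_int μ _)]
  conv_lhs => rw [← hinv]
  rw [integral_map (f := fun x => ((⌊u b - auxSec x⌋ : ℤ) : ℝ) - ((⌊u a - auxSec x⌋ : ℤ) : ℝ))
    hf.aemeasurable ((aux_floor_meas _).sub (aux_floor_meas _)).aestronglyMeasurable]
  refine integral_congr_ae (Eventually.of_forall fun y => ?_)
  obtain ⟨n, hn⟩ := aux_coe_eq (x := auxSec (f y)) (y := u (auxSec y))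
    (by rw [hu, auxSec_coe, auxSec_coe])
  have e : ∀ c : ℝ, ⌊u c - auxSec (f y)⌋ = ⌊c - auxSec y⌋ - n := by
    intro c
    rw [hn, ← sub_sub, Int.floor_sub_intCast, aux_floor_map]
  simp only [e]
  push_cast
  ring

theorem auxH_semiconj (μ : Measure T1) [IsProbabilityMeasure μ] (u : CircleDeg1Liftˣ)
    (f : T1 → T1)
    (hf : Measurable f) (hinv : Measure.map f μ = μ) (hu : ∀ x : ℝ, ((u x : ℝ) : T1) = f x)
    (x : ℝ) : auxH μ (u x) = auxH μ x + CircleDeg1Lift.translationNumber u := by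
  set t : ℝ := auxH μ (u 0) - auxH μ 0 with ht
  have h : ∀ x, auxH μ (u x) = t + auxH μ x := by
    intro x
    have := auxH_diff μ u f hf hinv hu 0 x
    linarith
  have hs : Function.Semiconj (auxH μ) (u : CircleDeg1Lift)
      (CircleDeg1Lift.translate (Multiplicative.ofAdd t) : CircleDeg1Liftˣ) := by
    intro x
    rw [CircleDeg1Lift.translate_apply, h]
  rw [CircleDeg1Lift.translationNumber_eq_of_semiconj hs,
    CircleDeg1Lift.translationNumber_translate, h, add_comm]

theorem auxH_val (μ : Measure T1) [IsProbabilityMeasure μ] (b : ℝ) (h0 : 0 ≤ b) (h1 : b < 1) :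
    auxH μ b = μ.real {x | auxSec x ≤ b} - 1 := by
  have hm : MeasurableSet {x | auxSec x ≤ b} := auxSec_meas measurableSet_Iic
  have e : ∀ x : T1, ((⌊b - auxSec x⌋ : ℤ) : ℝ)
      = ({x | auxSec x ≤ b}.indicator (fun _ => (1:ℝ)) x) - 1 := by
    intro x
    have h3 := auxSec_nonneg x
    have h4 := auxSec_lt x
    by_cases hx : auxSec x ≤ b
    · rw [indicator_of_mem (show x ∈ {x | auxSec x ≤ b} from hx)]
      have : ⌊b - auxSec x⌋ = 0 := Int.floor_eq_iff.2 (by push_cast; constructor <;> linarith)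
      simp [this]
    · rw [indicator_of_notMem (show x ∉ {x | auxSec x ≤ b} from hx)]
      have : ⌊b - auxSec x⌋ = -1 := Int.floor_eq_iff.2 (by push_cast; constructor <;> linarith)
      simp [this]
  rw [auxH_apply]
  simp only [e]
  rw [integral_sub ((integrable_const _).indicator hm) (integrable_const _),
    integral_indicator_const _ hm]
  simp

theorem aux_tendsto (μ : Measure T1) [IsProbabilityMeasure μ] :
    Tendsto (fun n : ℕ => auxH μ (1 - 1 / ((n : ℝ) + 1))) atTop (𝓝 0) := by
  have hb : ∀ n : ℕ, 0 ≤ 1 - 1 / ((n : ℝ) + 1) ∧ 1 - 1 / ((n : ℝ) + 1) < 1 := by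
    intro n
    have h1 : (0:ℝ) < (n:ℝ) + 1 := by positivity
    have h2 : 1 / ((n : ℝ) + 1) ≤ 1 := by
      rw [div_le_one h1]
      have : (0:ℝ) ≤ n := by positivity
      linarith
    have h3 : 0 < 1 / ((n : ℝ) + 1) := by positivity
    constructor <;> linarith
  have hval := fun n : ℕ => auxH_val μ _ (hb n).1 (hb n).2
  simp only [hval]
  have hmono : Monotone fun n : ℕ => {x : T1 | auxSec x ≤ 1 - 1 / ((n : ℝ) + 1)} := by
    intro n m hnm x hx
    have : 1 / ((m : ℝ) + 1) ≤ 1 / ((n : ℝ) + 1) := Nat.one_div_le_one_div hnm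
    simp only [mem_ofPred_eq] at hx ⊢
    linarith
  have hU : (⋃ n : ℕ, {x : T1 | auxSec x ≤ 1 - 1 / ((n : ℝ) + 1)}) = univ := by
    refine eq_univ_of_forall fun x => mem_iUnion.2 ?_
    obtain ⟨n, hn⟩ := exists_nat_one_div_lt (sub_pos.2 (auxSec_lt x))
    exact ⟨n, by simp only [mem_ofPred_eq]; linarith⟩
  have ht := tendsto_measure_iUnion_atTop (μ := μ) hmono
  rw [hU, measure_univ] at ht
  have ht2 := (ENNReal.tendsto_toReal ENNReal.one_ne_top).comp ht
  have := ht2.sub_const 1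
  simpa [Measure.real] using this

theorem aux_unique {Γ : Type*} [CommGroup Γ] [Infinite Γ] [MulAction Γ T1]
    (hcont : ∀ g : Γ, Continuous fun x : T1 => g • x)
    (hfree : ∀ (g : Γ) (x : T1), g • x = x → g = 1)
    (μ ν : Measure T1) [IsProbabilityMeasure μ] [IsProbabilityMeasure ν]
    (hμ : ∀ g : Γ, Measure.map (fun x : T1 => g • x) μ = μ)
    (hν : ∀ g : Γ, Measure.map (fun x : T1 => g • x) ν = ν) : μ = ν := by
  have key : ∀ x y, auxH μ x - auxH ν x ≤ auxH μ y - auxH ν y :=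
    aux_compare (P := fun u => u ∈ auxLifts Γ) (aux_dense Γ hcont hfree)
      (auxH μ).monotone (auxH ν).monotone
      (fun u ⟨g, hg⟩ x => auxH_semiconj μ u _ (hcont g).measurable (hμ g) hg x)
      (fun u ⟨g, hg⟩ x => auxH_semiconj ν u _ (hcont g).measurable (hν g) hg x)
  have hconst : ∀ x, auxH μ x - auxH ν x = auxH μ 0 - auxH ν 0 :=
    fun x => le_antisymm (key _ _) (key _ _)
  have hc : auxH μ 0 - auxH ν 0 = 0 := by
    have := (aux_tendsto μ).sub (aux_tendsto ν)
    simp only [hconst, sub_zero] at this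
    exact tendsto_nhds_unique tendsto_const_nhds this
  have hH : ∀ x, auxH μ x = auxH ν x := fun x => by linarith [hconst x]
  have := Measure.isProbabilityMeasure_map (μ := μ) auxSec_meas.aemeasurable
  have := Measure.isProbabilityMeasure_map (μ := ν) auxSec_meas.aemeasurable
  have hmap : Measure.map auxSec μ = Measure.map auxSec ν := by
    refine Measure.ext_of_Iic _ _ fun b => ?_
    rw [Measure.map_apply auxSec_meas measurableSet_Iic,
      Measure.map_apply auxSec_meas measurableSet_Iic]
    rcases lt_or_ge b 0 with h0 | h0
    · have : auxSec ⁻¹' Iic b = ∅ := by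
        ext x
        have := auxSec_nonneg x
        simp only [mem_preimage, mem_Iic, mem_empty_iff_false, iff_false, not_le]
        linarith
      rw [this, measure_empty, measure_empty]
    rcases lt_or_ge b 1 with h1 | h1
    · have := hH b
      rw [auxH_val μ b h0 h1, auxH_val ν b h0 h1] at this
      have h2 : μ.real {x | auxSec x ≤ b} = ν.real {x | auxSec x ≤ b} := by linarith
      exact (measureReal_eq_measureReal_iff).1 h2
    · have : auxSec ⁻¹' Iic b = univ := by
        ext x
        have := auxSec_lt x
        simp only [mem_preimage, mem_Iic, mem_univ, iff_true]
        linarith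
      rw [this, measure_univ, measure_univ]
  have hid : (fun x : ℝ => (x : T1)) ∘ auxSec = id := funext auxSec_coe
  have := congrArg (Measure.map (fun x : ℝ => (x : T1))) hmap
  rwa [Measure.map_map AddCircle.measurable_mk' auxSec_meas,
    Measure.map_map AddCircle.measurable_mk' auxSec_meas, hid, Measure.map_id,
    Measure.map_id] at this

/-- every free action of a countably infinite discrete abelian group
on the circle is uniquely ergodic: there is exactly one `G`-invariant regular Borel
probability measure on `𝕋`. -/
theorem statement8 (G : Type*) [CommGroup G] [Countable G] [Infinite G] [MulAction G T1]
    (hcont : ∀ g : G, Continuous fun x : T1 => g • x)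
    (hfree : FreeAction G) :
    ∃! μ : Measure T1, IsProbabilityMeasure μ ∧ μ.Regular ∧
      ∀ g : G, Measure.map (fun x : T1 => g • x) μ = μ := by
  obtain ⟨μ, hμ⟩ := aux_exists_measure hcont hfree
  refine ⟨μ, hμ, fun ν hν => ?_⟩
  have := hμ.1
  have := hν.1
  exact aux_unique hcont hfree ν μ hν.2.2 hμ.2.2
end
end

section
/- Let J be an ideal in a unital C*-algebra A with quotient B = A/J. Suppose J has stable rank one, B has stable rank one, and the index map K₁(B) → K₀(J) in the six-term exact sequence vanishes. Then A has stable rank one. -/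
noncomputable section

/-- A unital normed ring has stable rank one if its invertible elements are dense. -/
def StableRankOne (R : Type*) [NormedRing R] : Prop :=
  Dense {x : R | IsUnit x}

/-- The (non-unital) kernel ideal `J = ker π` has stable rank one: invertibles of the
unitisation `J + ℂ1 ⊆ A` are dense in it.  (Since `A` is unital and `J` is a closed
ideal, invertibility in `J + ℂ1` agrees with invertibility in `A`.) -/
def KernelStableRankOne {A B : Type*} [NormedRing A] [NormedAlgebra ℂ A]
    [NormedRing B] [NormedAlgebra ℂ B] [StarRing A] [StarRing B]
    (π : A →⋆ₐ[ℂ] B) : Prop :=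
  ∀ a : A, π a = 0 → ∀ (lam : ℂ) (ε : ℝ), 0 < ε →
    ∃ (b : A) (mu : ℂ), π b = 0 ∧ IsUnit (b + mu • (1 : A)) ∧
      ‖(a + lam • (1 : A)) - (b + mu • (1 : A))‖ < ε

/-- The index map `δ : K₁(B) → K₀(J)` of the extension `0 → ker π → A → B → 0`
vanishes.  We use the standard operational reformulation: for every unitary `u` over
`B`, some stabilisation `u ⊕ 1ₖ` is homotopic, through unitaries over `B`, to the
image of a unitary over `A`.  (`δ([u]) = 0` iff `[u]` lies in the image of
`K₁(A) → K₁(B)`.) -/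
def IndexMapVanishes {A B : Type*} [NormedRing A] [NormedAlgebra ℂ A]
    [NormedRing B] [NormedAlgebra ℂ B] [StarRing A] [StarRing B]
    (π : A →⋆ₐ[ℂ] B) : Prop :=
  ∀ (n : ℕ) (u : Matrix (Fin n) (Fin n) B), u ∈ unitary (Matrix (Fin n) (Fin n) B) →
    ∃ (k : ℕ) (v : Matrix (Fin (n + k)) (Fin (n + k)) A),
      v ∈ unitary (Matrix (Fin (n + k)) (Fin (n + k)) A) ∧
      ∃ f : ℝ → Matrix (Fin (n + k)) (Fin (n + k)) B,
        Continuous f ∧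
        (∀ t : ℝ, f t ∈ unitary (Matrix (Fin (n + k)) (Fin (n + k)) B)) ∧
        f 0 = v.map π ∧
        f 1 = Matrix.reindex finSumFinEquiv finSumFinEquiv
          (Matrix.fromBlocks u 0 0 (1 : Matrix (Fin k) (Fin k) B))


namespace NistorAux

/-- A matrix identity on `Fin 1` blocks: every `1 × 1` matrix is scalar. -/
lemma eq_scalar {R : Type*} [Ring R] (M : Matrix (Fin 1) (Fin 1) R) :
    M = Matrix.scalar (Fin 1) (M 0 0) := by
  ext i j
  fin_cases i; fin_cases j; simp

lemma isUnit_of_isUnit_fin_one {R : Type*} [Ring R] {M : Matrix (Fin 1) (Fin 1) R}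
    (h : IsUnit M) : IsUnit (M 0 0) := by
  obtain ⟨⟨M, N, h1, h2⟩, rfl⟩ := h
  refine ⟨⟨M 0 0, N 0 0, ?_, ?_⟩, rfl⟩
  · simpa [Matrix.mul_apply] using congrFun (congrFun h1 0) 0
  · simpa [Matrix.mul_apply] using congrFun (congrFun h2 0) 0

section blocks
variable {R : Type*} [Ring R] {m n : Type*} [Fintype m] [DecidableEq m] [Fintype n] [DecidableEq n]

lemma isUnit_lower (Z : Matrix n m R) :
    IsUnit (Matrix.fromBlocks (1 : Matrix m m R) 0 Z (1 : Matrix n n R)) :=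
  isUnit_iff_exists.2 ⟨Matrix.fromBlocks 1 0 (-Z) 1,
    by rw [Matrix.fromBlocks_multiply, ← Matrix.fromBlocks_one, Matrix.fromBlocks_inj]; simp,
    by rw [Matrix.fromBlocks_multiply, ← Matrix.fromBlocks_one, Matrix.fromBlocks_inj]; simp⟩

lemma isUnit_upper (Z : Matrix m n R) :
    IsUnit (Matrix.fromBlocks (1 : Matrix m m R) Z 0 (1 : Matrix n n R)) :=
  isUnit_iff_exists.2 ⟨Matrix.fromBlocks 1 (-Z) 0 1,
    by rw [Matrix.fromBlocks_multiply, ← Matrix.fromBlocks_one, Matrix.fromBlocks_inj]; simp,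
    by rw [Matrix.fromBlocks_multiply, ← Matrix.fromBlocks_one, Matrix.fromBlocks_inj]; simp⟩

lemma isUnit_corner {c : Matrix m m R} {r : Matrix n m R} {y : Matrix n n R}
    (h : IsUnit (Matrix.fromBlocks c 0 r y)) (hy : IsUnit y) : IsUnit c := by
  obtain ⟨V, h1, h2⟩ := isUnit_iff_exists.1 h
  rw [← Matrix.fromBlocks_toBlocks V, Matrix.fromBlocks_multiply, ← Matrix.fromBlocks_one,
    Matrix.fromBlocks_inj] at h1 h2
  obtain ⟨z, hz, -⟩ := isUnit_iff_exists.1 hy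
  have hb : V.toBlocks₁₂ = 0 := by
    have h3 : V.toBlocks₁₂ * y = 0 := by simpa using h2.2.1
    calc V.toBlocks₁₂ = V.toBlocks₁₂ * (y * z) := by rw [hz, Matrix.mul_one]
      _ = 0 := by rw [← Matrix.mul_assoc, h3, Matrix.zero_mul]
  refine isUnit_iff_exists.2 ⟨V.toBlocks₁₁, ?_, ?_⟩
  · simpa using h1.1
  · simpa [hb] using h2.1

end blocks

section
variable {A B : Type*}
    [NormedRing A] [StarRing A] [NormedAlgebra ℂ A] [CompleteSpace A]
    [NormedRing B] [StarRing B] [NormedAlgebra ℂ B]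

/-- One step of the descent, using stable rank one of the kernel. -/
lemma descend_one (π : A →⋆ₐ[ℂ] B) (hJ : KernelStableRankOne π)
    {m : Type*} [Fintype m] [DecidableEq m] (b : Matrix m m B)
    (W : Matrix (m ⊕ Fin 1) (m ⊕ Fin 1) A) (hW : IsUnit W)
    (hWb : W.map π = Matrix.fromBlocks b 0 0 1) :
    ∃ c : Matrix m m A, IsUnit c ∧ c.map π = b := by
  obtain ⟨V, hWV, hVW⟩ := isUnit_iff_exists.1 hW
  have hmap : W.map π * V.map π = 1 := by
    have := congrArg (fun M : Matrix _ _ A => M.map π) hWV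
    simpa [Matrix.map_mul] using this
  rw [hWb, ← Matrix.fromBlocks_toBlocks V, Matrix.fromBlocks_map, Matrix.fromBlocks_multiply,
    ← Matrix.fromBlocks_one, Matrix.fromBlocks_inj] at hmap
  rw [← Matrix.fromBlocks_toBlocks W, ← Matrix.fromBlocks_toBlocks V,
    Matrix.fromBlocks_multiply, ← Matrix.fromBlocks_one, Matrix.fromBlocks_inj] at hVW
  rw [← Matrix.fromBlocks_toBlocks W] at hW
  rw [← Matrix.fromBlocks_toBlocks W, Matrix.fromBlocks_map, Matrix.fromBlocks_inj] at hWb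
  obtain ⟨hP, hX, hR, hY⟩ := hWb
  have hR' : V.toBlocks₂₁.map π = 0 := by simpa using hmap.2.2.1
  have hY' : V.toBlocks₂₂.map π = 1 := by simpa using hmap.2.2.2
  have hrel := hVW.2.2.2
  generalize W.toBlocks₁₁ = P at *
  generalize W.toBlocks₁₂ = X at *
  generalize W.toBlocks₂₁ = R at *
  generalize W.toBlocks₂₂ = Y at *
  generalize V.toBlocks₂₁ = R' at *
  generalize V.toBlocks₂₂ = Y' at *
  have hq : π (Y' 0 0) = 1 := by simpa using congrFun (congrFun hY' 0) 0
  obtain ⟨q, hqu, hqn⟩ : ∃ q : A, IsUnit q ∧ IsUnit (1 + (q - Y' 0 0) * Y 0 0) := by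
    have hop : IsOpen {q : A | IsUnit (1 + (q - Y' 0 0) * Y 0 0)} :=
      Units.isOpen.preimage (by fun_prop : Continuous fun q : A => 1 + (q - Y' 0 0) * Y 0 0)
    obtain ⟨ε, hε, hball⟩ := Metric.isOpen_iff.1 hop (Y' 0 0) (by simp)
    obtain ⟨j, mu, -, hu, hn⟩ := hJ (Y' 0 0 - 1) (by simp [hq]) 1 ε hε
    refine ⟨_, hu, hball ?_⟩
    rw [Metric.mem_ball, dist_comm, dist_eq_norm]
    simpa using hn
  obtain ⟨t, hqt, htq⟩ := isUnit_iff_exists.1 hqu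
  set Q := Matrix.scalar (Fin 1) q with hQ
  set T := Matrix.scalar (Fin 1) t with hT
  have hQT : Q * T = 1 := by rw [hQ, hT, ← map_mul, hqt, map_one]
  have hTQ : T * Q = 1 := by rw [hQ, hT, ← map_mul, htq, map_one]
  set Y1 := Y + T * R' * X with hY1
  have hG : IsUnit (1 + (Q - Y') * Y) := by
    have := hqn.map (Matrix.scalar (Fin 1))
    rw [map_add, map_mul, map_sub, ← eq_scalar, ← eq_scalar, map_one] at this
    exact this
  have hY1u : IsUnit Y1 := by
    have h1 : Y1 = T * (1 + (Q - Y') * Y) := by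
      rw [← hrel, Matrix.sub_mul, hY1]
      have : R' * X + Y' * Y + (Q * Y - Y' * Y) = R' * X + Q * Y := by abel
      rw [this, Matrix.mul_add, ← Matrix.mul_assoc, ← Matrix.mul_assoc, hTQ, Matrix.one_mul,
        add_comm]
    rw [h1]
    exact (isUnit_iff_exists.2 ⟨Q, hTQ, hQT⟩).mul hG
  obtain ⟨Z, hYZ, hZY⟩ := isUnit_iff_exists.1 hY1u
  have hc : IsUnit (P - X * Z * (R + T * R' * P)) := by
    refine isUnit_corner (r := R + T * R' * P) (y := Y1) ?_ hY1u
    have := (isUnit_upper (-(X * Z))).mul ((isUnit_lower (T * R')).mul hW)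
    convert this using 1
    rw [Matrix.fromBlocks_multiply, Matrix.fromBlocks_multiply, Matrix.fromBlocks_inj]
    refine ⟨?_, ?_, ?_, ?_⟩
    · simp only [Matrix.one_mul, Matrix.zero_mul, add_zero, Matrix.neg_mul, ← sub_eq_add_neg]
      rw [add_comm R]
    · simp only [Matrix.one_mul, Matrix.zero_mul, add_zero, Matrix.neg_mul]
      rw [add_comm (T * R' * X), ← hY1, Matrix.mul_assoc, hZY, Matrix.mul_one, add_neg_cancel]
    · simp [add_comm]
    · simp [hY1, add_comm]
  refine ⟨_, hc, ?_⟩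
  rw [Matrix.map_sub _ (by simp), Matrix.map_mul, Matrix.map_mul]
  rw [hX, hP]
  simp

/-- Full descent. -/
lemma descend (π : A →⋆ₐ[ℂ] B) (hJ : KernelStableRankOne π)
    {m : Type*} [Fintype m] [DecidableEq m] (b : Matrix m m B) (k : ℕ) :
    ∀ (W : Matrix (m ⊕ Fin k) (m ⊕ Fin k) A), IsUnit W →
    W.map π = Matrix.fromBlocks b 0 0 1 →
    ∃ c : Matrix m m A, IsUnit c ∧ c.map π = b := by
  induction k with
  | zero =>
    intro W hW hWb
    let e : m ⊕ Fin 0 ≃ m := Equiv.sumEmpty m (Fin 0)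
    refine ⟨Matrix.reindexRingEquiv A e W, hW.map _, ?_⟩
    ext i j
    have := congrFun (congrFun hWb (Sum.inl i)) (Sum.inl j)
    simpa [e] using this
  | succ k ih =>
    intro W hW hWb
    let e : m ⊕ Fin (k + 1) ≃ (m ⊕ Fin k) ⊕ Fin 1 :=
      (Equiv.sumCongr (Equiv.refl m) finSumFinEquiv.symm).trans (Equiv.sumAssoc m (Fin k) (Fin 1)).symm
    obtain ⟨c, hc, hcb⟩ := descend_one π hJ (Matrix.fromBlocks b 0 0 (1 : Matrix (Fin k) (Fin k) B))
      (Matrix.reindexRingEquiv A e W) (hW.map _) (by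
        have h1 : (Matrix.reindexRingEquiv A e W).map π = (W.map π).submatrix e.symm e.symm := rfl
        rw [h1, hWb]
        ext i j
        rcases i with (i | i) | i <;> rcases j with (j | j) | j <;>
          simp [e, Matrix.one_apply, Fin.ext_iff] <;> omega)
    exact ih c hc hcb

end

section
variable {A B : Type*}
    [NormedRing A] [StarRing A] [NormedAlgebra ℂ A] [CompleteSpace A]
    [NormedRing B] [StarRing B] [NormedAlgebra ℂ B] [CompleteSpace B]

lemma isOpenMap_of_surj (π : A →⋆ₐ[ℂ] B) (hπ : Function.Surjective π) (hπcont : Continuous π) :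
    IsOpenMap π :=
  ContinuousLinearMap.isOpenMap (⟨π.toAlgHom.toLinearMap, hπcont⟩ : A →L[ℂ] B) hπ

attribute [local instance] Matrix.linftyOpNormedRing in
lemma isOpen_units_matrix (N : ℕ) : IsOpen {w : Matrix (Fin N) (Fin N) A | IsUnit w} := by
  have hcs : @CompleteSpace (Matrix (Fin N) (Fin N) A)
      (Matrix.linftyOpNormedRing (n := Fin N) (α := A)).toMetricSpace.toUniformSpace :=
    inferInstanceAs (CompleteSpace (Fin N → Fin N → A))
  exact Units.isOpen

lemma isOpen_lifts (π : A →⋆ₐ[ℂ] B) (hπ : Function.Surjective π) (hπcont : Continuous π)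
    (N : ℕ) :
    IsOpen {g : Matrix (Fin N) (Fin N) B |
      ∃ w : Matrix (Fin N) (Fin N) A, IsUnit w ∧ w.map π = g} := by
  have ho := isOpenMap_of_surj π hπ hπcont
  have h1 : IsOpenMap (fun w : Matrix (Fin N) (Fin N) A => w.map π) := by
    have h2 : IsOpenMap (Pi.map fun _ : Fin N => (Pi.map fun _ : Fin N => (π : A → B))) := by
      refine IsOpenMap.piMap (fun _ => IsOpenMap.piMap (fun _ => ho) (by simp [hπ])) ?_
      simp [Function.Surjective.piMap, hπ]
    exact h2
  exact h1 _ (isOpen_units_matrix N)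

/-- The endpoint of a path of unitaries starting at a liftable element is liftable. -/
lemma lift_path (π : A →⋆ₐ[ℂ] B) (hπ : Function.Surjective π) (hπcont : Continuous π)
    (N : ℕ) (f : ℝ → Matrix (Fin N) (Fin N) B) (hf : Continuous f)
    (hfu : ∀ t, f t ∈ unitary (Matrix (Fin N) (Fin N) B))
    (v : Matrix (Fin N) (Fin N) A) (hv : IsUnit v) (h0 : f 0 = v.map π) :
    ∃ w : Matrix (Fin N) (Fin N) A, IsUnit w ∧ w.map π = f 1 := by
  set S := {g : Matrix (Fin N) (Fin N) B |
      ∃ w : Matrix (Fin N) (Fin N) A, IsUnit w ∧ w.map π = g} with hS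
  have hSo : IsOpen S := isOpen_lifts π hπ hπcont N
  have h1S : (1 : Matrix (Fin N) (Fin N) B) ∈ S := ⟨1, isUnit_one, by simp⟩
  have hclopen : IsClopen (f ⁻¹' S) := by
    refine ⟨⟨?_⟩, hSo.preimage hf⟩
    rw [isOpen_iff_mem_nhds]
    intro t ht
    have hc : Continuous fun s => star (f t) * f s := continuous_const.matrix_mul hf
    have hmem : t ∈ (fun s => star (f t) * f s) ⁻¹' S := by
      change star (f t) * f t ∈ S
      rw [(hfu t).1]; exact h1S
    filter_upwards [(hSo.preimage hc).mem_nhds hmem] with s hs hs'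
    apply ht
    obtain ⟨w, hw, hwf⟩ := hs'
    obtain ⟨w', hw', hwf'⟩ := hs
    obtain ⟨x, hx, hx'⟩ := isUnit_iff_exists.1 hw'
    refine ⟨w * x, hw.mul (isUnit_iff_exists.2 ⟨w', hx', hx⟩), ?_⟩
    have hxm : w'.map π * x.map π = 1 := by
      rw [← Matrix.map_mul, hx]; simp
    have hwf'' : w'.map π = star (f t) * f s := hwf'
    rw [hwf''] at hxm
    rw [Matrix.map_mul, hwf]
    calc f s * x.map π = (f t * star (f t)) * (f s * x.map π) := by rw [(hfu t).2, one_mul]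
      _ = f t * (star (f t) * f s * x.map π) := by simp only [mul_assoc]
      _ = f t := by rw [hxm, mul_one]
  have huniv : f ⁻¹' S = Set.univ := hclopen.eq_univ ⟨0, v, hv, h0.symm⟩
  have : (1 : ℝ) ∈ f ⁻¹' S := huniv ▸ Set.mem_univ _
  exact this

end

/-- Polar decomposition of invertibles, with the positive part an exponential. -/
lemma polar {B : Type*} [CStarAlgebra B] (b : B) (hb : IsUnit b) :
    ∃ u h : B, u ∈ unitary B ∧ b = u * NormedSpace.exp h := by
  let _ := CStarAlgebra.spectralOrder B
  have := CStarAlgebra.spectralOrderedRing B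
  have hsq : CFC.abs b * CFC.abs b = star b * b := CFC.abs_mul_abs b
  have habs : IsUnit (CFC.abs b) := by
    have h1 : IsUnit (CFC.abs b * CFC.abs b) := hsq ▸ hb.star.mul hb
    exact ((Commute.refl (CFC.abs b)).isUnit_mul_iff.1 h1).1
  have hsa : star (CFC.abs b) = CFC.abs b := (CFC.abs_nonneg b).star_eq
  have hexp : NormedSpace.exp (CFC.log (CFC.abs b)) = CFC.abs b :=
    CFC.exp_log _ (habs.isStrictlyPositive (CFC.abs_nonneg b))
  obtain ⟨d, hd, hd'⟩ := isUnit_iff_exists.1 habs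
  have hds : star d * CFC.abs b = 1 := by
    have h1 := congrArg star hd
    rwa [star_mul, hsa, star_one] at h1
  have hu : star (b * d) * (b * d) = 1 := by
    calc star (b * d) * (b * d) = star d * (star b * b) * d := by
          rw [star_mul]; simp only [mul_assoc]
      _ = (star d * CFC.abs b) * (CFC.abs b * d) := by rw [← hsq]; simp only [mul_assoc]
      _ = 1 := by rw [hds, hd, one_mul]
  have huu : IsUnit (b * d) := hb.mul (isUnit_iff_exists.2 ⟨_, hd', hd⟩)
  refine ⟨b * d, CFC.log (CFC.abs b), Unitary.mem_iff.2 ⟨hu, ?_⟩, ?_⟩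
  · obtain ⟨y, hy, -⟩ := isUnit_iff_exists.1 huu
    rwa [left_inv_eq_right_inv hu hy]
  · rw [hexp, mul_assoc, hd', mul_one]

end NistorAux

/-- Nistor's lemma: for an extension `0 → J → A → B → 0` of a
unital C*-algebra `A` with quotient `B = A/J`, if `J` and `B` have stable rank one
and the index map `K₁(B) → K₀(J)` vanishes, then `A` has stable rank one. -/
theorem statement16 {A B : Type*}
    [NormedRing A] [StarRing A] [CStarRing A] [NormedAlgebra ℂ A]
    [StarModule ℂ A] [CompleteSpace A]
    [NormedRing B] [StarRing B] [CStarRing B] [NormedAlgebra ℂ B]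
    [StarModule ℂ B] [CompleteSpace B]
    (π : A →⋆ₐ[ℂ] B) (hπ : Function.Surjective π) (hπcont : Continuous π)
    (hJ : KernelStableRankOne π) (hB : StableRankOne B)
    (hidx : IndexMapVanishes π) :
    StableRankOne A := by
  have ho := NistorAux.isOpenMap_of_surj π hπ hπcont
  let : NormedAlgebra ℚ A := NormedAlgebra.restrictScalars ℚ ℂ A
  let : NormedAlgebra ℚ B := NormedAlgebra.restrictScalars ℚ ℂ B
  let : CStarAlgebra B := {}
  have hlift : ∀ b : B, IsUnit b → ∃ c : A, IsUnit c ∧ π c = b := by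
    intro b hb
    obtain ⟨u, h, hu, rfl⟩ := NistorAux.polar b hb
    obtain ⟨h', rfl⟩ := hπ h
    have hU : Matrix.scalar (Fin 1) u ∈ unitary (Matrix (Fin 1) (Fin 1) B) := by
      obtain ⟨h1, h2⟩ := Unitary.mem_iff.1 hu
      refine Unitary.mem_iff.2 ⟨?_, ?_⟩ <;>
      · ext i j
        fin_cases i; fin_cases j
        simp [Matrix.mul_apply, Matrix.star_apply, h1, h2]
    obtain ⟨k, v, hv, f, hf, hfu, hf0, hf1⟩ := hidx 1 _ hU
    obtain ⟨w, hw, hwf⟩ := NistorAux.lift_path π hπ hπcont _ f hf hfu v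
      (isUnit_iff_exists.2 ⟨star v, hv.2, hv.1⟩) hf0
    obtain ⟨c, hc, hcu⟩ := NistorAux.descend π hJ (Matrix.scalar (Fin 1) u) k
      (Matrix.reindexRingEquiv A finSumFinEquiv.symm w) (hw.map _) (by
        have h1 : (Matrix.reindexRingEquiv A finSumFinEquiv.symm w).map π =
          (w.map π).submatrix finSumFinEquiv finSumFinEquiv := rfl
        rw [h1, hwf, hf1]
        simp)
    refine ⟨c 0 0 * NormedSpace.exp h', (NistorAux.isUnit_of_isUnit_fin_one hc).mul
      (NormedSpace.isUnit_exp h'), ?_⟩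
    rw [map_mul, NormedSpace.map_exp π hπcont]
    congr 1
    simpa using congrFun (congrFun hcu 0) 0
  intro a
  rw [Metric.mem_closure_iff]
  intro ε hε
  obtain ⟨_, ⟨a', ha', rfl⟩, hau⟩ := hB.inter_open_nonempty (π '' Metric.ball a (ε / 2))
    (ho _ Metric.isOpen_ball) ⟨π a, a, Metric.mem_ball_self (by positivity), rfl⟩
  obtain ⟨c, hc, hca⟩ := hlift _ hau
  obtain ⟨d, hcd, hdc⟩ := isUnit_iff_exists.1 hc
  have hj : π (d * a' - 1) = 0 := by
    rw [map_sub, map_mul, ← hca, ← map_mul, hdc, map_one, sub_self]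
  obtain ⟨j, mu, -, hu, hn⟩ := hJ _ hj 1 (ε / 2 / (‖c‖ + 1)) (by positivity)
  refine ⟨c * (j + mu • (1 : A)), hc.mul hu, ?_⟩
  have h1 : dist a a' < ε / 2 := by rw [dist_comm]; exact ha'
  have h2 : dist a' (c * (j + mu • (1 : A))) < ε / 2 := by
    have h3 : a' - c * (j + mu • (1 : A)) =
        c * ((d * a' - 1 + (1 : ℂ) • (1 : A)) - (j + mu • (1 : A))) := by
      rw [one_smul, sub_add_cancel, mul_sub c, ← mul_assoc, hcd, one_mul]
    rw [dist_eq_norm, h3]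
    refine (norm_mul_le _ _).trans_lt ?_
    rw [lt_div_iff₀ (by positivity)] at hn
    nlinarith [norm_nonneg c, norm_nonneg ((d * a' - 1 + (1 : ℂ) • (1 : A)) - (j + mu • (1 : A))),
      hn, norm_nonneg (c)]
  linarith [dist_triangle a a' (c * (j + mu • (1 : A)))]
end
end

section
/- Let G be a countably infinite discrete abelian group with a free Denjoy action on 𝕋, and let A = C(𝕋) ⋊ G with unique tracial state τ. Then the trace ideal J_τ = {a ∈ A : τ(a*a) = 0} equals the ideal C₀(𝕋\Y) ⋊ G, and this is the unique maximal (proper closed two-sided) ideal of A. -/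
open MeasureTheory Topology Filter Set Function

noncomputable section

variable (G : Type*) [Group G] [MulAction G T1]

variable {G}

/-- A model of the (reduced) crossed product `C(𝕋) ⋊ G`: a unital C*-algebra `A`
together with a unital embedding of `C(𝕋)`, a unitary representation of `G`
satisfying the covariance relation, such that these generate `A`, and a faithful
conditional expectation onto `C(𝕋)` killing the off-diagonal terms.  (These data
characterise the reduced crossed product up to isomorphism.) -/
structure CrossedProductData (G : Type*) [Group G] [MulAction G T1] (A : Type*)
    [NormedRing A] [StarRing A] [CStarRing A] [NormedAlgebra ℂ A]
    [StarModule ℂ A] [CompleteSpace A] where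
  cont_smul : ∀ g : G, Continuous fun x : T1 => g • x
  iota : C(T1, ℂ) →⋆ₐ[ℂ] A
  iota_injective : Function.Injective iota
  iota_isometry : ∀ f : C(T1, ℂ), ‖iota f‖ = ‖f‖
  lam : G → A
  lam_unitary : ∀ g : G, lam g ∈ unitary A
  lam_one : lam 1 = 1
  lam_mul : ∀ g h : G, lam (g * h) = lam g * lam h
  covariance : ∀ (g : G) (f : C(T1, ℂ)),
    lam g * iota f * star (lam g) =
      iota (f.comp ⟨fun x : T1 => g⁻¹ • x, cont_smul g⁻¹⟩)
  generates : closure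
      (Submodule.span ℂ {a : A | ∃ (f : C(T1, ℂ)) (g : G), a = iota f * lam g} :
        Set A) = Set.univ
  E : A →ₗ[ℂ] C(T1, ℂ)
  E_cont : Continuous E
  E_faithful : ∀ a : A, E (star a * a) = 0 → a = 0
  E_diag : ∀ f : C(T1, ℂ), E (iota f) = f
  E_off : ∀ (f : C(T1, ℂ)) (g : G), g ≠ 1 → E (iota f * lam g) = 0

/-- A tracial state on a unital C*-algebra. -/
def IsTracialState {A : Type*} [NormedRing A] [StarRing A] [CStarRing A]
    [NormedAlgebra ℂ A] [StarModule ℂ A] [CompleteSpace A]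
    (τ : A →ₗ[ℂ] ℂ) : Prop :=
  Continuous τ ∧ τ 1 = 1 ∧ (∀ a b : A, τ (a * b) = τ (b * a)) ∧
    ∀ a : A, ∃ r : ℝ, 0 ≤ r ∧ τ (star a * a) = (r : ℂ)

/-- A closed two-sided ideal of `A`, as a set. -/
def IsClosedTwoSidedIdeal {A : Type*} [NormedRing A] (S : Set A) : Prop :=
  IsClosed S ∧ (0 : A) ∈ S ∧ (∀ a ∈ S, ∀ b ∈ S, a + b ∈ S) ∧
    (∀ a ∈ S, -a ∈ S) ∧ ∀ a ∈ S, ∀ x : A, x * a ∈ S ∧ a * x ∈ S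

open scoped Pointwise in
lemma aux_card_pow {G : Type*} [CommGroup G] [DecidableEq G] (K : Finset G) (n : ℕ) :
    (K ^ n).card ≤ (n + 1) ^ K.card := by
  classical
  have h : K ^ n ⊆ (Finset.univ : Finset (K → Fin (n+1))).image
      (fun e => ∏ k : K, (k : G) ^ (e k : ℕ)) := by
    induction n with
    | zero =>
      intro x hx
      simp only [pow_zero, Finset.mem_one] at hx
      subst hx
      exact Finset.mem_image.2 ⟨fun _ => 0, Finset.mem_univ _, by simp⟩
    | succ n ih =>
      intro x hx
      rw [pow_succ, Finset.mem_mul] at hx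
      obtain ⟨y, hy, z, hz, rfl⟩ := hx
      obtain ⟨e, -, rfl⟩ := Finset.mem_image.1 (ih hy)
      refine Finset.mem_image.2 ⟨fun k => if k = ⟨z, hz⟩ then (e k).succ else (e k).castSucc,
        Finset.mem_univ _, ?_⟩
      have : ∀ k : K, (k : G) ^ (((if k = ⟨z, hz⟩ then (e k).succ else (e k).castSucc) : Fin (n+1+1)) : ℕ)
          = (k : G) ^ (e k : ℕ) * (if k = ⟨z, hz⟩ then z else 1) := by
        intro k
        split_ifs with hk
        · subst hk; simp [pow_succ]
        · simp
      simp only [this, Finset.prod_mul_distrib]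
      simp
  refine (Finset.card_le_card h).trans (Finset.card_image_le.trans ?_)
  simp

open scoped Pointwise in
lemma aux_foelner {G : Type*} [CommGroup G] [DecidableEq G] (K : Finset G) {ε : ℝ} (hε : 0 < ε) :
    ∃ F : Finset G, F.Nonempty ∧
      ∀ k ∈ K, (1 - ε) * F.card ≤ ((F.filter (fun h => k * h ∈ F)).card : ℝ) := by
  set K' := insert 1 K with hK'
  have h1 : (1 : G) ∈ K' := by simp [K']
  obtain ⟨n, hn⟩ : ∃ n : ℕ, ((K' ^ (n+1)).card : ℝ) ≤ (1 + ε) * (K' ^ n).card := by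
    by_contra! hcon
    have hgrow : ∀ n : ℕ, (1 + ε) ^ n ≤ ((K' ^ n).card : ℝ) := by
      intro n
      induction n with
      | zero => simp
      | succ n ih =>
        rw [pow_succ']
        exact (mul_le_mul_of_nonneg_left ih (by linarith)).trans (hcon n).le
    have hlim := tendsto_pow_const_mul_const_pow_of_abs_lt_one K'.card
      (r := (1 + ε)⁻¹) (by
        rw [abs_of_pos (by positivity)]
        exact inv_lt_one_of_one_lt₀ (by linarith))
    have hlim2 := (tendsto_add_atTop_iff_nat 1).2 hlim
    have h3 : ∀ᶠ n : ℕ in atTop, ((n + 1 : ℕ) : ℝ) ^ K'.card * (1 + ε)⁻¹ ^ (n+1) < (1 + ε)⁻¹ :=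
      hlim2.eventually_lt_const (by positivity)
    obtain ⟨n, hn⟩ := h3.exists
    have h4 : ((K' ^ n).card : ℝ) ≤ ((n + 1 : ℕ) : ℝ) ^ K'.card := by
      exact_mod_cast aux_card_pow K' n
    have h5 := (hgrow n).trans h4
    have h6 : (1 + ε) ^ n * (1 + ε)⁻¹ ^ (n+1) = (1 + ε)⁻¹ := by
      rw [pow_succ, ← mul_assoc, ← mul_pow, mul_inv_cancel₀ (by positivity)]; simp
    have h7 := mul_le_mul_of_nonneg_right h5 (show 0 ≤ (1 + ε)⁻¹ ^ (n+1) by positivity)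
    linarith
  refine ⟨K' ^ (n+1), ⟨1, ?_⟩, ?_⟩
  · exact Finset.one_mem_pow h1
  · intro k hk
    have hsub : K' ^ n ⊆ (K' ^ (n+1)).filter (fun h => k * h ∈ K' ^ (n+1)) := by
      intro h hh
      refine Finset.mem_filter.2 ⟨?_, ?_⟩
      · exact Finset.pow_subset_pow_right h1 (Nat.le_succ n) hh
      · rw [pow_succ']
        exact Finset.mul_mem_mul (by simp [K', hk]) hh
    have := Finset.card_le_card hsub
    have h2 : ((K' ^ n).card : ℝ) ≤ ((K' ^ (n+1)).filter (fun h => k * h ∈ K' ^ (n+1))).card := by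
      exact_mod_cast this
    have h8 : (0:ℝ) ≤ (K' ^ n).card := by positivity
    rcases le_or_gt ε 1 with h | h
    · nlinarith [mul_nonneg (sq_nonneg ε) h8, mul_le_mul_of_nonneg_left hn (by linarith : 0 ≤ 1 - ε)]
    · have : (0:ℝ) ≤ (K' ^ (n+1)).card := by positivity
      nlinarith

/-- A unital positive map is bounded by 2. -/
lemma aux_pos_bound' {G A : Type*} [NormedRing A] [StarRing A] [CStarRing A] [NormedAlgebra ℂ A]
    [StarModule ℂ A] [CompleteSpace A] (M : A →ₗ[ℂ] A) (hM : Continuous M) (h1 : M 1 = 1)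
    (D : Set A) (hD : Dense D)
    (hpos : ∀ b ∈ D, ∃ (s : Finset G) (x : G → A) (c : ℝ), 0 ≤ c ∧
      M (star b * b) = c • ∑ i ∈ s, star (x i) * x i) (a : A) : ‖M a‖ ≤ 2 * ‖a‖ := by
  let : CStarAlgebra A := {}
  let := CStarAlgebra.spectralOrder A
  have := CStarAlgebra.spectralOrderedRing A
  have hsq : ∀ b : A, 0 ≤ M (star b * b) := by
    have hcl : IsClosed {b : A | 0 ≤ M (star b * b)} :=
      (CStarAlgebra.isClosed_nonneg (A := A)).preimage
        (hM.comp ((continuous_star).mul continuous_id))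
    intro b
    refine (hcl.closure_subset_iff.2 ?_) (hD b)
    intro b hb
    obtain ⟨s, x, c, hc, h⟩ := hpos b hb
    show 0 ≤ M (star b * b)
    rw [h]
    exact smul_nonneg hc (Finset.sum_nonneg fun i _ => star_mul_self_nonneg _)
  have hpos' : ∀ b : A, 0 ≤ b → 0 ≤ M b := by
    intro b hb
    obtain ⟨y, rfl⟩ := CStarAlgebra.nonneg_iff_eq_star_mul_self.1 hb
    exact hsq y
  have halg : ∀ r : ℝ, M (algebraMap ℝ A r) = algebraMap ℝ A r := by
    intro r
    have : algebraMap ℝ A r = (r : ℂ) • (1 : A) := by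
      rw [Algebra.algebraMap_eq_smul_one]; simp
    rw [this, map_smul, h1]
  have hsa : ∀ b : A, IsSelfAdjoint b → ‖M b‖ ≤ ‖b‖ := by
    intro b hb
    have l1 : 0 ≤ algebraMap ℝ A ‖b‖ - b := sub_nonneg.2 hb.le_algebraMap_norm_self
    have l2 : 0 ≤ b + algebraMap ℝ A ‖b‖ := by
      have := hb.neg_algebraMap_norm_le_self
      exact neg_le_iff_add_nonneg.1 this
    have l3 := hpos' _ l1
    have l4 := hpos' _ l2
    rw [map_sub, halg] at l3
    rw [map_add, halg] at l4
    have hMsa : IsSelfAdjoint (M b) := by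
      have : M b = (M b + algebraMap ℝ A ‖b‖) - algebraMap ℝ A ‖b‖ := by simp
      rw [this]
      refine (IsSelfAdjoint.of_nonneg l4).sub ?_
      exact IsSelfAdjoint.algebraMap A (IsSelfAdjoint.all _)
    nontriviality A
    have hmem := CStarAlgebra.norm_or_neg_norm_mem_spectrum (a := M b) hMsa
    have u1 : M b ≤ algebraMap ℝ A ‖b‖ := sub_nonneg.1 l3
    have u2 : algebraMap ℝ A (-‖b‖) ≤ M b := by
      rw [map_neg]; exact neg_le_iff_add_nonneg.2 l4
    rcases hmem with h | h
    · exact (le_algebraMap_iff_spectrum_le hMsa).1 u1 _ h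
    · have := (algebraMap_le_iff_le_spectrum hMsa).1 u2 _ h
      linarith
  have hdec := realPart_add_I_smul_imaginaryPart a
  rw [← hdec, map_add, map_smul]
  refine (norm_add_le _ _).trans ?_
  rw [norm_smul, Complex.norm_I, one_mul, hdec]
  have := hsa _ (realPart a).2
  have := hsa _ (imaginaryPart a).2
  have : ‖(realPart a : A)‖ ≤ ‖a‖ := realPart.norm_le a
  have : ‖(imaginaryPart a : A)‖ ≤ ‖a‖ := imaginaryPart.norm_le a
  linarith

lemma aux_locConn : LocallyConnectedSpace T1 := by
  rw [locallyConnectedSpace_iff_subsets_isOpen_isConnected]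
  intro x U hU
  obtain ⟨x0, rfl⟩ := QuotientAddGroup.mk_surjective x
  have hc : Continuous (fun t : ℝ => (t : T1)) := AddCircle.continuous_mk' 1
  have hop : IsOpenMap (fun t : ℝ => (t : T1)) := QuotientAddGroup.isOpenMap_coe
  have h2 : (fun t : ℝ => (t : T1)) ⁻¹' U ∈ 𝓝 x0 := hc.continuousAt.preimage_mem_nhds hU
  obtain ⟨ε, hε, hb⟩ := Metric.mem_nhds_iff.1 h2
  refine ⟨(fun t : ℝ => (t : T1)) '' Metric.ball x0 ε, image_subset_iff.2 hb,
    hop _ Metric.isOpen_ball, ⟨x0, Metric.mem_ball_self hε, rfl⟩, ?_⟩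
  refine IsConnected.image ?_ _ hc.continuousOn
  rw [Real.ball_eq_Ioo]
  exact isConnected_Ioo (by linarith)

lemma aux_frontier (C : Set T1) (hC : IsPreconnected C) (p : T1) (hp : p ∉ C) :
    (closure C \ C).Finite := by
  rcases C.eq_empty_or_nonempty with rfl | hne
  · simp
  obtain ⟨p0, rfl⟩ := QuotientAddGroup.mk_surjective p
  have hc : Continuous (fun t : ℝ => (t : T1)) := AddCircle.continuous_mk' 1
  set s : T1 → ℝ := fun z => (AddCircle.equivIco 1 p0 z : ℝ) with hs
  have hsc : ContinuousOn s C := by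
    intro z hz
    have : z ≠ (p0 : T1) := by rintro rfl; exact hp hz
    exact (continuous_subtype_val.continuousAt.comp
      (AddCircle.continuousAt_equivIco 1 p0 this)).continuousWithinAt
  have hs1 : ∀ z, ((s z : ℝ) : T1) = z := fun z => (AddCircle.equivIco 1 p0).symm_apply_apply z
  have hC' : IsPreconnected (s '' C) := hC.image _ hsc
  have hbd : ∀ z, s z ∈ Ico p0 (p0+1) := fun z => (AddCircle.equivIco 1 p0 z).2
  have hB : BddBelow (s '' C) := ⟨p0, by rintro _ ⟨z, -, rfl⟩; exact (hbd z).1⟩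
  have hA : BddAbove (s '' C) := ⟨p0+1, by rintro _ ⟨z, -, rfl⟩; exact (hbd z).2.le⟩
  have hIoo : Ioo (sInf (s '' C)) (sSup (s '' C)) ⊆ s '' C :=
    IsConnected.Ioo_csInf_csSup_subset ⟨hne.image s, hC'⟩ hB hA
  have hcl : closure C ⊆ (fun t : ℝ => (t : T1)) '' Icc (sInf (s '' C)) (sSup (s '' C)) := by
    refine closure_minimal ?_ (isCompact_Icc.image hc).isClosed
    intro z hz
    exact ⟨s z, ⟨csInf_le hB ⟨z, hz, rfl⟩, le_csSup hA ⟨z, hz, rfl⟩⟩, hs1 z⟩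
  refine (Set.toFinite ((fun t : ℝ => (t : T1)) '' {sInf (s '' C), sSup (s '' C)})).subset ?_
  rintro z ⟨hz, hzC⟩
  obtain ⟨t, ht, rfl⟩ := hcl hz
  refine ⟨t, ?_, rfl⟩
  by_contra hcon
  simp only [mem_insert_iff, mem_singleton_iff, not_or] at hcon
  have : t ∈ s '' C := hIoo ⟨lt_of_le_of_ne ht.1 (Ne.symm hcon.1), lt_of_le_of_ne ht.2 hcon.2⟩
  obtain ⟨w, hw, rfl⟩ := this
  exact hzC (by simpa [hs1] using hw)

lemma aux_wander {G : Type*} [Group G] [MulAction G T1]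
    (hcont : ∀ g : G, Continuous fun x : T1 => g • x)
    (hfree : ∀ (g : G) (x : T1), g • x = x → g = 1)
    (Y : Set T1) (hYne : Y.Nonempty) (hYcl : IsClosed Y) (hYinv : ∀ g : G, ∀ x ∈ Y, g • x ∈ Y)
    (x : T1) (hx : x ∉ Y) :
    ∃ C : Set T1, IsOpen C ∧ x ∈ C ∧ {k : G | ∃ y ∈ C, k • y ∈ C}.Finite := by
  have := aux_locConn
  set C := connectedComponentIn Yᶜ x with hCdef
  have hCo : IsOpen C := hYcl.isOpen_compl.connectedComponentIn
  have hxC : x ∈ C := mem_connectedComponentIn hx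
  have hCY : C ⊆ Yᶜ := connectedComponentIn_subset _ _
  have hCpre : IsPreconnected C := isPreconnected_connectedComponentIn
  obtain ⟨p, hp⟩ := hYne
  have hpC : p ∉ C := fun h => hCY h hp
  have hfin := aux_frontier C hCpre p hpC
  have hne : (closure C \ C).Nonempty := by
    by_contra hcon
    rw [Set.not_nonempty_iff_eq_empty, Set.sdiff_eq_empty] at hcon
    have hclosed : IsClosed C := closure_subset_iff_isClosed.1 hcon
    rcases isClopen_iff.1 ⟨hclosed, hCo⟩ with h | h
    · rw [h] at hxC; exact hxC
    · rw [h] at hpC; exact hpC trivial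
  obtain ⟨q, hqcl, hqC⟩ := hne
  have hstab : ∀ k : G, (∃ y ∈ C, k • y ∈ C) → ∀ z ∈ C, k • z ∈ C := by
    rintro k ⟨y, hy, hky⟩ z hz
    have h1 : IsPreconnected ((fun z : T1 => k • z) '' C) := hCpre.image _ (hcont k).continuousOn
    have h2 : (fun z : T1 => k • z) '' C ⊆ Yᶜ := by
      rintro _ ⟨w, hw, rfl⟩ hwY
      have := hYinv k⁻¹ _ hwY
      simp only [inv_smul_smul] at this
      exact hCY hw this
    have h3 := h1.subset_connectedComponentIn ⟨y, hy, rfl⟩ h2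
    have h4 : C = connectedComponentIn Yᶜ (k • y) := connectedComponentIn_eq hky
    rw [h4]
    exact h3 ⟨z, hz, rfl⟩
  refine ⟨C, hCo, hxC, ?_⟩
  refine Set.Finite.of_finite_image (f := fun k : G => k • q) (hfin.subset ?_) ?_
  · rintro _ ⟨k, hk, rfl⟩
    refine ⟨?_, ?_⟩
    · have : MapsTo (fun z : T1 => k • z) C C := hstab k hk
      exact this.closure (hcont k) hqcl
    · intro hkq
      obtain ⟨y, hy, hky⟩ := hk
      have := hstab k⁻¹ ⟨k • y, hky, by simpa using hy⟩ _ hkq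
      exact hqC (by simpa using this)
  · intro k _ l _ hkl
    have hkl' : k • q = l • q := hkl
    have : (l⁻¹ * k) • q = q := by rw [mul_smul, hkl', inv_smul_smul]
    have := hfree _ _ this
    exact (inv_mul_eq_one.1 this).symm

lemma aux_indep {G : Type*} [Group G] [Infinite G] (H : Set G) (hH : H.Finite) (N : ℕ) :
    ∃ F : Finset G, F.card = N ∧ ∀ g ∈ F, ∀ h ∈ F, g ≠ h → g⁻¹ * h ∉ H := by
  classical
  induction N with
  | zero => exact ⟨∅, by simp⟩
  | succ N ih =>
    obtain ⟨F, hF, hind⟩ := ih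
    have hfin : ((F : Set G) ∪ Set.image2 (fun f h => f * h) F H ∪
        Set.image2 (fun f h => f * h⁻¹) F H).Finite :=
      (F.finite_toSet.union (F.finite_toSet.image2 _ hH)).union (F.finite_toSet.image2 _ hH)
    obtain ⟨g, hg⟩ := hfin.exists_notMem
    simp only [mem_union, not_or] at hg
    obtain ⟨⟨h1, h2⟩, h3⟩ := hg
    refine ⟨insert g F, by rw [Finset.card_insert_of_notMem (by simpa using h1), hF], ?_⟩
    intro a ha b hb hab hmem
    rw [Finset.mem_insert] at ha hb
    rcases ha with rfl | ha <;> rcases hb with rfl | hb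
    · exact hab rfl
    · exact h3 ⟨b, hb, _, hmem, by group⟩
    · exact h2 ⟨a, ha, _, hmem, by group⟩
    · exact hind a ha b hb hab hmem

lemma aux_minimal {G : Type*} [Group G] [MulAction G T1]
    (Z : Set T1) (hne : Z.Nonempty) (hcl : IsClosed Z) (hinv : ∀ g : G, ∀ x ∈ Z, g • x ∈ Z) :
    ∃ M ⊆ Z, M.Nonempty ∧ IsClosed M ∧ (∀ g : G, ∀ x ∈ M, g • x ∈ M) ∧
      ∀ W : Set T1, W.Nonempty → IsClosed W → (∀ g : G, ∀ x ∈ W, g • x ∈ W) → W ⊆ M → W = M := by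
  obtain ⟨M, hMZ, hM⟩ := zorn_superset_nonempty
    {W : Set T1 | W.Nonempty ∧ IsClosed W ∧ (∀ g : G, ∀ x ∈ W, g • x ∈ W)} (by
      intro c hc hchain hcne
      refine ⟨⋂₀ c, ⟨?_, ?_, ?_⟩, fun s hs => sInter_subset_of_mem hs⟩
      · have := hcne.to_subtype
        rw [sInter_eq_iInter]
        refine IsCompact.nonempty_iInter_of_directed_nonempty_isCompact_isClosed _ ?_ ?_ ?_ ?_
        · intro a b
          rcases hchain.total a.2 b.2 with h | h
          · exact ⟨a, subset_rfl, h⟩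
          · exact ⟨b, h, subset_rfl⟩
        · exact fun i => (hc i.2).1
        · exact fun i => (hc i.2).2.1.isCompact
        · exact fun i => (hc i.2).2.1
      · exact isClosed_sInter fun s hs => (hc hs).2.1
      · intro g x hx s hs
        exact (hc hs).2.2 g x (hx s hs)) Z ⟨hne, hcl, hinv⟩
  refine ⟨M, hMZ, hM.prop.1, hM.prop.2.1, hM.prop.2.2, ?_⟩
  intro W h1 h2 h3 h4
  exact h4.antisymm (hM.le_of_le ⟨h1, h2, h3⟩ h4)

section
variable {G : Type*} [CommGroup G] [MulAction G T1]
    {A : Type*} [NormedRing A] [StarRing A] [CStarRing A] [NormedAlgebra ℂ A]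
    [StarModule ℂ A] [CompleteSpace A]

def auxTr (D : CrossedProductData G A) (g : G) (f : C(T1, ℂ)) : C(T1, ℂ) :=
  f.comp ⟨fun x => g • x, D.cont_smul g⟩

lemma auxTr_apply (D : CrossedProductData G A) (g : G) (f : C(T1, ℂ)) (x : T1) :
    auxTr D g f x = f (g • x) := rfl

lemma aux_star_lam (D : CrossedProductData G A) (g : G) : star (D.lam g) = D.lam g⁻¹ := by
  have h1 : star (D.lam g) * D.lam g = 1 := (Unitary.mem_iff.1 (D.lam_unitary g)).1
  have h2 : D.lam g * D.lam g⁻¹ = 1 := by rw [← D.lam_mul, mul_inv_cancel, D.lam_one]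
  exact left_inv_eq_right_inv h1 h2

lemma aux_comm (D : CrossedProductData G A) (g : G) (f : C(T1, ℂ)) :
    D.lam g * D.iota f = D.iota (auxTr D g⁻¹ f) * D.lam g := by
  have h := D.covariance g f
  have h1 : star (D.lam g) * D.lam g = 1 := (Unitary.mem_iff.1 (D.lam_unitary g)).1
  calc D.lam g * D.iota f = D.lam g * D.iota f * star (D.lam g) * D.lam g := by
        rw [mul_assoc _ (star _), h1, mul_one]
    _ = _ := by rw [h]; rfl

lemma aux_tr_tr (D : CrossedProductData G A) (g : G) (f : C(T1, ℂ)) :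
    auxTr D g⁻¹ (auxTr D g f) = f := by
  ext x; simp [auxTr_apply]

lemma aux_tr_tr' (D : CrossedProductData G A) (g : G) (f : C(T1, ℂ)) :
    auxTr D g (auxTr D g⁻¹ f) = f := by
  ext x; simp [auxTr_apply]

/-- finite sums -/
def auxTheta (D : CrossedProductData G A) : (G →₀ C(T1, ℂ)) →ₗ[ℂ] A :=
  Finsupp.lsum ℂ (fun k => (LinearMap.mulRight ℂ (D.lam k)) ∘ₗ D.iota.toAlgHom.toLinearMap)

lemma auxTheta_apply (D : CrossedProductData G A) (c : G →₀ C(T1, ℂ)) :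
    auxTheta D c = ∑ k ∈ c.support, D.iota (c k) * D.lam k := by
  simp [auxTheta, Finsupp.sum]

lemma auxTheta_dense (D : CrossedProductData G A) : Dense (Set.range (auxTheta D)) := by
  have h := D.generates
  rw [← dense_iff_closure_eq] at h
  refine h.mono ?_
  intro x hx
  have : Submodule.span ℂ {a : A | ∃ (f : C(T1, ℂ)) (g : G), a = D.iota f * D.lam g}
      ≤ LinearMap.range (auxTheta D) := by
    rw [Submodule.span_le]
    rintro _ ⟨f, g, rfl⟩
    exact ⟨Finsupp.single g f, by simp [auxTheta]⟩
  exact this hx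

lemma aux_E (D : CrossedProductData G A) [DecidableEq G] (f : C(T1, ℂ)) (g : G) :
    D.E (D.iota f * D.lam g) = if g = 1 then f else 0 := by
  split_ifs with h
  · subst h; rw [D.lam_one, mul_one, D.E_diag]
  · exact D.E_off f g h

/-- Fejer type multiplier. -/
def auxM (D : CrossedProductData G A) (F : Finset G) : A →ₗ[ℂ] A where
  toFun a := ((F.card : ℂ)⁻¹) • ∑ g ∈ F, ∑ h ∈ F,
    D.lam g * D.iota (D.E (star (D.lam g) * a * D.lam h)) * star (D.lam h)
  map_add' a b := by
    rw [← smul_add, ← Finset.sum_add_distrib]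
    congr 1
    refine Finset.sum_congr rfl fun g _ => ?_
    rw [← Finset.sum_add_distrib]
    refine Finset.sum_congr rfl fun h _ => ?_
    simp [mul_add, add_mul]
  map_smul' c a := by
    rw [RingHom.id_apply, smul_comm]
    congr 1
    rw [Finset.smul_sum]
    refine Finset.sum_congr rfl fun g _ => ?_
    rw [Finset.smul_sum]
    refine Finset.sum_congr rfl fun h _ => ?_
    simp

lemma aux_iota_cont (D : CrossedProductData G A) : Continuous D.iota :=
  (AddMonoidHomClass.isometry_of_norm D.iota D.iota_isometry).continuous

lemma auxM_cont (D : CrossedProductData G A) (F : Finset G) : Continuous (auxM D F) := by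
  have h1 := D.E_cont
  have h2 := aux_iota_cont D
  show Continuous fun a => ((F.card : ℂ)⁻¹) • ∑ g ∈ F, ∑ h ∈ F,
    D.lam g * D.iota (D.E (star (D.lam g) * a * D.lam h)) * star (D.lam h)
  fun_prop

lemma auxM_apply (D : CrossedProductData G A) [DecidableEq G] (F : Finset G)
    (f : C(T1, ℂ)) (k : G) :
    auxM D F (D.iota f * D.lam k) = ((F.card : ℂ)⁻¹ *
      ∑ g ∈ F, ∑ h ∈ F, if k * h = g then (1:ℂ) else 0) • (D.iota f * D.lam k) := by
  show ((F.card : ℂ)⁻¹) • ∑ g ∈ F, ∑ h ∈ F,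
    D.lam g * D.iota (D.E (star (D.lam g) * (D.iota f * D.lam k) * D.lam h)) * star (D.lam h) = _
  rw [mul_smul, Finset.sum_smul]
  congr 1
  refine Finset.sum_congr rfl fun g _ => ?_
  rw [Finset.sum_smul]
  refine Finset.sum_congr rfl fun h _ => ?_
  have e1 : star (D.lam g) * (D.iota f * D.lam k) * D.lam h
      = D.iota (auxTr D g f) * D.lam (g⁻¹ * k * h) := by
    rw [aux_star_lam, ← mul_assoc, aux_comm, inv_inv, D.lam_mul, D.lam_mul]
    simp only [mul_assoc]
  have e2 : g⁻¹ * k * h = 1 ↔ k * h = g := by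
    rw [mul_assoc, inv_mul_eq_one]; exact eq_comm
  rw [e1, aux_E]
  simp only [e2]
  split_ifs with hkh
  · rw [aux_comm, aux_tr_tr, aux_star_lam, mul_assoc, ← D.lam_mul, one_smul, ← hkh]
    simp
  · simp

lemma aux_star_mul (D : CrossedProductData G A) (f f' : C(T1, ℂ)) (k l : G) :
    star (D.iota f * D.lam k) * (D.iota f' * D.lam l) =
      D.iota (auxTr D k (star f * f')) * D.lam (k⁻¹ * l) := by
  rw [star_mul, aux_star_lam, ← map_star, D.lam_mul]
  calc D.lam k⁻¹ * D.iota (star f) * (D.iota f' * D.lam l)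
      = (D.lam k⁻¹ * (D.iota (star f) * D.iota f')) * D.lam l := by simp only [mul_assoc]
    _ = _ := by rw [← map_mul, aux_comm, inv_inv, mul_assoc]

lemma auxM_sq (D : CrossedProductData G A) [DecidableEq G] (F : Finset G) (c : G →₀ C(T1, ℂ)) :
    ∃ (P : Finset G) (x : G → A),
      auxM D F (star (auxTheta D c) * auxTheta D c) =
        ((F.card : ℝ)⁻¹) • ∑ p ∈ P, star (x p) * x p := by
  set b : G → A := fun k => D.iota (c k) * D.lam k with hb
  set K := c.support with hK
  set P : Finset G := (K ×ˢ F).image (fun z => z.1 * z.2) with hP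
  refine ⟨P, fun p => ∑ k ∈ K, ∑ g ∈ F, if k * g = p then b k else 0, ?_⟩
  have e1 : star (auxTheta D c) * auxTheta D c = ∑ k ∈ K, ∑ l ∈ K, star (b k) * b l := by
    rw [auxTheta_apply, star_sum, Finset.sum_mul_sum]
  have e2 : ∀ k l, auxM D F (star (b k) * b l) = ((F.card : ℂ)⁻¹) •
      ∑ g ∈ F, ∑ h ∈ F, if k * g = l * h then star (b k) * b l else 0 := by
    intro k l
    rw [hb]
    simp only
    rw [aux_star_mul, auxM_apply, mul_smul, Finset.sum_smul]
    congr 1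
    refine Finset.sum_congr rfl fun g _ => ?_
    rw [Finset.sum_smul]
    refine Finset.sum_congr rfl fun h _ => ?_
    have : k⁻¹ * l * h = g ↔ k * g = l * h := by
      rw [mul_assoc, inv_mul_eq_iff_eq_mul]; exact eq_comm
    simp only [this]
    split_ifs <;> simp
  rw [e1]
  simp only [map_sum, e2]
  rw [show ∀ y : A, ((F.card : ℝ)⁻¹) • y = ((F.card : ℂ)⁻¹) • y from fun y => by
    rw [← Complex.coe_smul]; simp]
  simp only [← Finset.smul_sum]
  congr 1
  have e3 : ∀ p, star (∑ k ∈ K, ∑ g ∈ F, if k * g = p then b k else 0) *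
      (∑ k ∈ K, ∑ g ∈ F, if k * g = p then b k else 0) =
      ∑ k ∈ K, ∑ l ∈ K, ∑ g ∈ F, ∑ h ∈ F,
        if k * g = p then (if l * h = p then star (b k) * b l else 0) else 0 := by
    intro p
    rw [star_sum, Finset.sum_mul_sum]
    refine Finset.sum_congr rfl fun k _ => ?_
    refine Finset.sum_congr rfl fun l _ => ?_
    rw [star_sum, Finset.sum_mul_sum]
    refine Finset.sum_congr rfl fun g _ => ?_
    refine Finset.sum_congr rfl fun h _ => ?_
    split_ifs <;> simp
  simp only [e3]
  symm
  rw [Finset.sum_comm]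
  refine Finset.sum_congr rfl fun k hk => ?_
  rw [Finset.sum_comm]
  refine Finset.sum_congr rfl fun l _ => ?_
  rw [Finset.sum_comm]
  refine Finset.sum_congr rfl fun g hg => ?_
  rw [Finset.sum_comm]
  refine Finset.sum_congr rfl fun h _ => ?_
  have hmem : k * g ∈ P := Finset.mem_image.2 ⟨(k, g), Finset.mem_product.2 ⟨hk, hg⟩, rfl⟩
  rw [Finset.sum_ite_eq, if_pos hmem]
  simp only [eq_comm]

end

section
variable {G : Type*} [CommGroup G] [MulAction G T1]
    {A : Type*} [NormedRing A] [StarRing A] [CStarRing A] [NormedAlgebra ℂ A]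
    [StarModule ℂ A] [CompleteSpace A]

lemma auxM_bound (D : CrossedProductData G A) [DecidableEq G] (F : Finset G) (hF : F.Nonempty)
    (a : A) : ‖auxM D F a‖ ≤ 2 * ‖a‖ := by
  have hcard : (F.card : ℂ) ≠ 0 := by exact_mod_cast hF.card_pos.ne'
  have hone : auxM D F 1 = 1 := by
    have h := auxM_apply D F 1 1
    simp only [map_one, D.lam_one, mul_one, one_mul, Finset.sum_ite_eq', Finset.sum_ite_eq] at h
    rw [h]
    rw [Finset.sum_congr rfl (fun g hg => if_pos hg)]
    simp [hcard]
  refine aux_pos_bound' (G := G) (auxM D F) (auxM_cont D F) hone (Set.range (auxTheta D)) (auxTheta_dense D) ?_ a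
  rintro _ ⟨c, rfl⟩
  obtain ⟨P, x, h⟩ := auxM_sq D F c
  exact ⟨P, x, _, by positivity, h⟩

lemma aux_ideal_smul {S : Set A} (hS : IsClosedTwoSidedIdeal S) (c : ℂ) {a : A} (ha : a ∈ S) :
    c • a ∈ S := by
  have := (hS.2.2.2.2 a ha (c • 1)).1
  simpa using this

lemma aux_ideal_sum {S : Set A} (hS : IsClosedTwoSidedIdeal S) {ι : Type*} (s : Finset ι)
    (x : ι → A) (hx : ∀ i ∈ s, x i ∈ S) : ∑ i ∈ s, x i ∈ S := by
  classical
  induction s using Finset.induction_on with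
  | empty => simpa using hS.2.1
  | insert i s hi ih =>
    rw [Finset.sum_insert hi]
    exact hS.2.2.1 _ (hx i (by simp)) _ (ih fun j hj => hx j (by simp [hj]))

/-- Elements all of whose Fourier coefficients lie in a closed ideal lie in the ideal. -/
lemma aux_fourier (D : CrossedProductData G A) {S : Set A} (hS : IsClosedTwoSidedIdeal S) (y : A)
    (hy : ∀ g h : G, D.iota (D.E (star (D.lam g) * y * D.lam h)) ∈ S) : y ∈ S := by
  classical
  have hMS : ∀ F, auxM D F y ∈ S := by
    intro F
    refine aux_ideal_smul hS _ (aux_ideal_sum hS _ _ fun g _ => aux_ideal_sum hS _ _ fun h _ => ?_)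
    exact (hS.2.2.2.2 _ (hS.2.2.2.2 _ (hy g h) _).1 _).2
  refine hS.1.closure_subset_iff.2 subset_rfl (Metric.mem_closure_iff.2 ?_)
  intro ε hε
  obtain ⟨x, hxr, hx⟩ := Metric.dense_iff.1 (auxTheta_dense D) y (ε/4) (by positivity)
  obtain ⟨c, rfl⟩ := hx
  rw [Metric.mem_ball, dist_eq_norm] at hxr
  set B : ℝ := ∑ k ∈ c.support, ‖D.iota (c k) * D.lam k‖ with hB
  have hB0 : 0 ≤ B := Finset.sum_nonneg fun _ _ => norm_nonneg _
  obtain ⟨F, hF, hF2⟩ := aux_foelner c.support (ε := ε / (4 * (B + 1))) (by positivity)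
  refine ⟨auxM D F y, hMS F, ?_⟩
  have hcard : (0:ℝ) < F.card := by exact_mod_cast hF.card_pos
  have hk : ∀ k ∈ c.support, ‖D.iota (c k) * D.lam k - auxM D F (D.iota (c k) * D.lam k)‖ ≤
      ε / (4 * (B + 1)) * ‖D.iota (c k) * D.lam k‖ := by
    intro k hk
    rw [auxM_apply]
    have hcount : (∑ g ∈ F, ∑ h ∈ F, if k * h = g then (1:ℂ) else 0) =
        (((F.filter (fun h => k * h ∈ F)).card : ℝ) : ℂ) := by
      rw [Finset.sum_comm]
      simp only [Finset.sum_ite_eq]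
      simp
    rw [hcount]
    set m : ℝ := ((F.filter (fun h => k * h ∈ F)).card : ℝ) with hm
    have hm1 : m ≤ F.card := by
      rw [hm]; exact_mod_cast Finset.card_filter_le _ _
    have hm2 := hF2 k hk
    have : ∀ z : A, z - ((F.card : ℂ)⁻¹ * (m : ℂ)) • z = ((1 - (F.card : ℝ)⁻¹ * m : ℝ) : ℂ) • z := by
      intro z
      push_cast
      rw [sub_smul, one_smul]
    rw [this, norm_smul]
    refine mul_le_mul_of_nonneg_right ?_ (norm_nonneg _)
    rw [Complex.norm_real, Real.norm_eq_abs, abs_le]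
    have h3 : (F.card : ℝ)⁻¹ * m ≤ 1 := by
      rw [inv_mul_le_iff₀ hcard]; simpa using hm1
    have h4 : 1 - ε / (4 * (B + 1)) ≤ (F.card : ℝ)⁻¹ * m := by
      rw [le_inv_mul_iff₀ hcard]; linarith
    have h5 : 0 < ε / (4 * (B + 1)) := by positivity
    constructor <;> linarith
  have hx : ‖auxTheta D c - auxM D F (auxTheta D c)‖ ≤ ε / 4 := by
    rw [auxTheta_apply, map_sum, ← Finset.sum_sub_distrib]
    refine (norm_sum_le _ _).trans ((Finset.sum_le_sum hk).trans ?_)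
    rw [← Finset.mul_sum, ← hB, div_mul_eq_mul_div, div_le_div_iff₀ (by positivity) (by norm_num)]
    nlinarith
  have hb := auxM_bound D F hF (auxTheta D c - y)
  rw [dist_eq_norm]
  calc ‖y - auxM D F y‖ = ‖-(auxTheta D c - y) + (auxTheta D c - auxM D F (auxTheta D c)) +
        auxM D F (auxTheta D c - y)‖ := by rw [map_sub]; congr 1; abel
    _ ≤ ‖auxTheta D c - y‖ + ‖auxTheta D c - auxM D F (auxTheta D c)‖ +
        ‖auxM D F (auxTheta D c - y)‖ := by
        refine (norm_add_le _ _).trans (add_le_add_left ((norm_add_le _ _).trans ?_) _)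
        rw [norm_neg]
    _ < ε := by linarith

/-- `Φ` is an averaging operator with symbol `m`. -/
def AuxW (D : CrossedProductData G A) (Φ : A →ₗ[ℂ] A) (m : G → C(T1, ℂ)) : Prop :=
  (∀ a, ‖Φ a‖ ≤ ‖a‖) ∧ (∀ S : Set A, IsClosedTwoSidedIdeal S → ∀ a ∈ S, Φ a ∈ S) ∧ m 1 = 1 ∧
    ∀ f k, Φ (D.iota f * D.lam k) = D.iota (f * m k) * D.lam k

lemma auxW_id (D : CrossedProductData G A) : AuxW D LinearMap.id (fun _ => 1) :=
  ⟨fun _ => le_rfl, fun _ _ _ h => h, rfl, fun f k => by simp⟩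

lemma auxW_comp (D : CrossedProductData G A) {Φ Ψ : A →ₗ[ℂ] A} {m n : G → C(T1, ℂ)}
    (h1 : AuxW D Φ m) (h2 : AuxW D Ψ n) : AuxW D (Φ ∘ₗ Ψ) (fun k => n k * m k) :=
  ⟨fun a => (h1.1 _).trans (h2.1 _), fun S hS a ha => h1.2.1 S hS _ (h2.2.1 S hS a ha),
    by simp [h1.2.2.1, h2.2.2.1], fun f k => by
      rw [LinearMap.comp_apply, h2.2.2.2, h1.2.2.2, mul_assoc]⟩

lemma auxW_local (D : CrossedProductData G A) (k : G) (x : T1) (hk : k⁻¹ • x ≠ x) :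
    ∃ s ∈ 𝓝 x, ∃ Φ m, AuxW D Φ m ∧ ∀ y ∈ s, m k y = 0 := by
  obtain ⟨U, V, hU, hV, hxU, hxV, hUV⟩ := t2_separation hk.symm
  obtain ⟨N1, ⟨hN1, hN1c⟩, hN1U⟩ := (closed_nhds_basis x).mem_iff.1 (hU.mem_nhds hxU)
  obtain ⟨N2, ⟨hN2, hN2c⟩, hN2V⟩ := (closed_nhds_basis (k⁻¹ • x)).mem_iff.1 (hV.mem_nhds hxV)
  simp only [id] at hN1U hN2V
  obtain ⟨h, h0, h1, -⟩ := exists_continuous_zero_one_of_isClosed hN2c hN1c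
    ((hUV.symm).mono hN2V hN1U)
  set u : C(T1, ℂ) := ⟨fun y => Complex.exp (((Real.pi * h y : ℝ) : ℂ) * Complex.I), by fun_prop⟩
    with hu
  have hnu : ∀ y, ‖u y‖ = 1 := fun y => Complex.norm_exp_ofReal_mul_I _
  have hun : ‖D.iota u‖ ≤ 1 := by
    rw [D.iota_isometry]
    exact (ContinuousMap.norm_le _ zero_le_one).2 fun y => (hnu y).le
  have huu : u * star u = 1 := by
    ext y
    simp only [ContinuousMap.mul_apply, ContinuousMap.star_apply, ContinuousMap.one_apply]
    have := Complex.mul_conj (u y)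
    rw [Complex.normSq_eq_norm_sq, hnu] at this
    simpa using this
  refine ⟨N1 ∩ (fun y : T1 => k⁻¹ • y) ⁻¹' N2,
    Filter.inter_mem hN1 ((D.cont_smul k⁻¹).continuousAt.preimage_mem_nhds hN2),
    (2:ℂ)⁻¹ • (LinearMap.id + LinearMap.mulRight ℂ (star (D.iota u)) ∘ₗ
      LinearMap.mulLeft ℂ (D.iota u)),
    fun g => (2:ℂ)⁻¹ • (1 + u * auxTr D g⁻¹ (star u)), ⟨?_, ?_, ?_, ?_⟩, ?_⟩
  · intro a
    have e : ‖D.iota u * a * star (D.iota u)‖ ≤ ‖a‖ := by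
      calc ‖D.iota u * a * star (D.iota u)‖ ≤ ‖D.iota u‖ * ‖a‖ * ‖star (D.iota u)‖ :=
            (norm_mul_le _ _).trans (mul_le_mul_of_nonneg_right (norm_mul_le _ _) (norm_nonneg _))
        _ ≤ 1 * ‖a‖ * 1 := by
            rw [norm_star]; gcongr
        _ = ‖a‖ := by ring
    simp only [LinearMap.smul_apply, LinearMap.add_apply, LinearMap.id_apply, LinearMap.comp_apply,
      LinearMap.mulRight_apply, LinearMap.mulLeft_apply]
    rw [norm_smul]
    have e2 := norm_add_le a (D.iota u * a * star (D.iota u))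
    have e3 : ‖(2:ℂ)⁻¹‖ = 2⁻¹ := by simp
    rw [e3]
    linarith
  · intro S hS a ha
    simp only [LinearMap.smul_apply, LinearMap.add_apply, LinearMap.id_apply, LinearMap.comp_apply,
      LinearMap.mulRight_apply, LinearMap.mulLeft_apply]
    refine aux_ideal_smul hS _ (hS.2.2.1 _ ha _ ?_)
    exact (hS.2.2.2.2 _ (hS.2.2.2.2 _ ha _).1 _).2
  · have : auxTr D 1⁻¹ (star u) = star u := by ext y; simp [auxTr_apply]
    simp only [this, huu]
    ext y
    simp
    norm_num
  · intro f g
    simp only [LinearMap.smul_apply, LinearMap.add_apply, LinearMap.id_apply, LinearMap.comp_apply,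
      LinearMap.mulRight_apply, LinearMap.mulLeft_apply]
    rw [← map_star]
    have : D.iota u * (D.iota f * D.lam g) * D.iota (star u) =
        D.iota (f * (u * auxTr D g⁻¹ (star u))) * D.lam g := by
      calc _ = D.iota u * D.iota f * (D.lam g * D.iota (star u)) := by simp only [mul_assoc]
        _ = D.iota (u * f * auxTr D g⁻¹ (star u)) * D.lam g := by
          rw [aux_comm, ← mul_assoc, ← map_mul, ← map_mul]
        _ = _ := by congr 2; ring
    rw [this, mul_smul_comm, map_smul, smul_mul_assoc, mul_add, mul_one, map_add, add_mul]
  · rintro y ⟨hy1, hy2⟩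
    have e1 : u y = -1 := by
      have : h y = 1 := h1 hy1
      simp [hu, this]
    have e2 : u (k⁻¹ • y) = 1 := by
      have : h (k⁻¹ • y) = 0 := h0 hy2
      simp [hu, this]
    simp [auxTr_apply, e1, e2]

lemma auxW_single (D : CrossedProductData G A) (hfree : FreeAction G) (k : G) (hk : k ≠ 1) :
    ∃ Φ m, AuxW D Φ m ∧ m k = 0 := by
  have := (isCompact_univ (X := T1)).induction_on
    (p := fun s => ∃ Φ m, AuxW D Φ m ∧ ∀ y ∈ s, m k y = 0)
    ⟨_, _, auxW_id D, by simp⟩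
    (fun s t hst ⟨Φ, m, h, hm⟩ => ⟨Φ, m, h, fun y hy => hm y (hst hy)⟩)
    (fun s t ⟨Φ, m, h, hm⟩ ⟨Ψ, n, h', hn⟩ => ⟨_, _, auxW_comp D h h', by
      rintro y (hy | hy)
      · simp [hm y hy]
      · simp [hn y hy]⟩)
    (fun x _ => by
      obtain ⟨s, hs, h⟩ := auxW_local D k x (fun h => hk (by simpa using hfree _ _ h))
      exact ⟨s, by simpa using hs, h⟩)
  obtain ⟨Φ, m, h, hm⟩ := this
  exact ⟨Φ, m, h, by ext y; simpa using hm y trivial⟩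

lemma auxW_finset (D : CrossedProductData G A) (hfree : FreeAction G) (K : Finset G) :
    ∃ Φ m, AuxW D Φ m ∧ ∀ k ∈ K, k ≠ 1 → m k = 0 := by
  classical
  induction K using Finset.induction_on with
  | empty => exact ⟨_, _, auxW_id D, by simp⟩
  | insert k K hkK ih =>
    obtain ⟨Φ, m, h, hm⟩ := ih
    by_cases hk : k = 1
    · refine ⟨Φ, m, h, fun l hl hl1 => ?_⟩
      rcases Finset.mem_insert.1 hl with rfl | hl
      · exact absurd hk hl1
      · exact hm l hl hl1
    · obtain ⟨Ψ, n, h', hn⟩ := auxW_single D hfree k hk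
      refine ⟨_, _, auxW_comp D h h', fun l hl hl1 => ?_⟩
      rcases Finset.mem_insert.1 hl with rfl | hl
      · simp [hn]
      · simp [hm l hl hl1]

/-- The expectation maps closed ideals into themselves. -/
lemma aux_E_mem (D : CrossedProductData G A) (hfree : FreeAction G) {S : Set A}
    (hS : IsClosedTwoSidedIdeal S) {b : A} (hb : b ∈ S) : D.iota (D.E b) ∈ S := by
  classical
  have hcE : Continuous fun a => D.iota (D.E a) := (aux_iota_cont D).comp D.E_cont
  refine hS.1.closure_subset_iff.2 subset_rfl (Metric.mem_closure_iff.2 ?_)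
  intro ε hε
  obtain ⟨δ, hδ, hδE⟩ := Metric.continuousAt_iff.1 (hcE.continuousAt (x := b)) (ε/2) (by positivity)
  obtain ⟨x, hxr, hx⟩ := Metric.dense_iff.1 (auxTheta_dense D) b (min δ (ε/2)) (by positivity)
  obtain ⟨c, rfl⟩ := hx
  rw [Metric.mem_ball, lt_min_iff] at hxr
  obtain ⟨Φ, m, hΦ, hm⟩ := auxW_finset D hfree c.support
  refine ⟨Φ b, hΦ.2.1 S hS b hb, ?_⟩
  have hE := hδE hxr.1
  have key : Φ (auxTheta D c) = D.iota (D.E (auxTheta D c)) := by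
    rw [auxTheta_apply, map_sum, map_sum, map_sum]
    refine Finset.sum_congr rfl fun k hk => ?_
    rw [hΦ.2.2.2, aux_E]
    split_ifs with h1
    · subst h1; rw [hΦ.2.2.1, mul_one, D.lam_one, mul_one]
    · rw [hm k hk h1]; simp
  rw [← key] at hE
  have h2 : dist (Φ (auxTheta D c)) (Φ b) < ε / 2 := by
    rw [dist_eq_norm, ← map_sub]
    refine (hΦ.1 _).trans_lt ?_
    rw [← dist_eq_norm]; exact hxr.2
  calc dist (D.iota (D.E b)) (Φ b) ≤ dist (D.iota (D.E b)) (Φ (auxTheta D c)) +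
        dist (Φ (auxTheta D c)) (Φ b) := dist_triangle _ _ _
    _ < ε := by rw [dist_comm (D.iota (D.E b))]; linarith

/-- Functions in a proper closed ideal vanish on the minimal set. -/
lemma aux_vanish (D : CrossedProductData G A) (Y : Set T1)
    (hYuniq : ∀ Z : Set T1, IsMinimalSet G Z → Z = Y) {S : Set A}
    (hS : IsClosedTwoSidedIdeal S) (hne : S ≠ Set.univ) {f : C(T1, ℂ)} (hf : D.iota f ∈ S) :
    ∀ y ∈ Y, f y = 0 := by
  set Z : Set T1 := {x | ∀ f : C(T1, ℂ), D.iota f ∈ S → f x = 0} with hZ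
  have hZcl : IsClosed Z := by
    have : Z = ⋂ f : {f : C(T1, ℂ) // D.iota f ∈ S}, {x | f.1 x = 0} := by
      ext x; simp [hZ]
    rw [this]
    exact isClosed_iInter fun f => isClosed_eq f.1.continuous continuous_const
  have hZinv : ∀ g : G, ∀ x ∈ Z, g • x ∈ Z := by
    intro g x hx f hf
    have h1 : D.lam g⁻¹ * D.iota f * D.lam g ∈ S :=
      (hS.2.2.2.2 _ (hS.2.2.2.2 _ hf _).1 _).2
    rw [aux_comm, mul_assoc, ← D.lam_mul, inv_inv, inv_mul_cancel, D.lam_one, mul_one] at h1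
    exact hx _ h1
  have hZne : Z.Nonempty := by
    by_contra hcon
    let I : Ideal C(T1, ℂ) :=
      { carrier := {f | D.iota f ∈ S}
        add_mem' := fun {a b} ha hb => by
          show D.iota (a + b) ∈ S
          rw [map_add]; exact hS.2.2.1 _ ha _ hb
        zero_mem' := by show D.iota 0 ∈ S; rw [map_zero]; exact hS.2.1
        smul_mem' := fun c f hf => by
          show D.iota (c * f) ∈ S
          rw [map_mul]; exact (hS.2.2.2.2 _ hf _).1 }
    have hI : I ≠ ⊤ := by
      intro h
      have h1 : (1 : C(T1, ℂ)) ∈ I := by rw [h]; trivial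
      have h2 : D.iota 1 ∈ S := h1
      rw [map_one] at h2
      refine hne (Set.eq_univ_of_forall fun a => ?_)
      simpa using (hS.2.2.2.2 _ h2 a).1
    obtain ⟨M, hM, hIM⟩ := Ideal.exists_le_maximal I hI
    have hMc : IsClosed (M : Set C(T1, ℂ)) := Ideal.IsMaximal.isClosed
    obtain ⟨x, rfl⟩ := (ContinuousMap.ideal_isMaximal_iff M (hI := hMc)).1 hM
    refine hcon ⟨x, fun f hf => ?_⟩
    have := hIM (show f ∈ I from hf)
    rw [ContinuousMap.mem_idealOfSet] at this
    exact this (by simp)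
  obtain ⟨M, hMZ, h1, h2, h3, h4⟩ := aux_minimal (G := G) Z hZne hZcl hZinv
  have : M = Y := hYuniq M ⟨h1, h2, h3, h4⟩
  intro y hy
  exact hMZ (this ▸ hy) f hf

end

section
variable {G : Type*} [CommGroup G] [MulAction G T1]
    {A : Type*} [NormedRing A] [StarRing A] [CStarRing A] [NormedAlgebra ℂ A]
    [StarModule ℂ A] [CompleteSpace A]

lemma aux_trace_iff (τ : A →ₗ[ℂ] ℂ) (hτ : IsTracialState τ) (a : A) :
    τ (star a * a) = 0 ↔ ∀ x, τ (x * a) = 0 := by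
  refine ⟨fun h x => ?_, fun h => h _⟩
  obtain ⟨y, rfl⟩ : ∃ y, x = star y := ⟨star x, by simp⟩
  obtain ⟨r, hr0, hr⟩ := hτ.2.2.2 y
  set z := τ (star y * a) with hz
  set w := τ (star a * y) with hw
  have hq : ∀ t : ℂ, ∃ s : ℝ, 0 ≤ s ∧ (r : ℂ) + t * z + star t * w = s := by
    intro t
    obtain ⟨s, hs0, hs⟩ := hτ.2.2.2 (y + t • a)
    refine ⟨s, hs0, ?_⟩
    rw [← hs]
    simp only [star_add, star_smul, add_mul, mul_add, map_add, smul_mul_assoc, mul_smul_comm,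
      map_smul, hr, h, smul_eq_mul, mul_zero, ← hz, ← hw]
    ring
  have key : ∀ v : ℂ, (∀ t : ℝ, ∃ s : ℝ, 0 ≤ s ∧ (r : ℂ) + t * v = s) → v = 0 := by
    intro v hv
    have hre : ∀ t : ℝ, 0 ≤ r + t * v.re := by
      intro t
      obtain ⟨s, hs0, hs⟩ := hv t
      have := congrArg Complex.re hs
      simp at this
      linarith
    have him : v.im = 0 := by
      obtain ⟨s, hs0, hs⟩ := hv 1
      have := congrArg Complex.im hs
      simpa using this
    have hre0 : v.re = 0 := by
      by_contra hne
      have := hre (-(r + 1) / v.re)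
      rw [div_mul_cancel₀ _ hne] at this
      linarith
    exact Complex.ext hre0 him
  have h1 : z + w = 0 := key _ fun t => by
    obtain ⟨s, hs0, hs⟩ := hq t
    refine ⟨s, hs0, ?_⟩
    rw [← hs]; simp; ring
  have h2 : Complex.I * (z - w) = 0 := key _ fun t => by
    obtain ⟨s, hs0, hs⟩ := hq (t * Complex.I)
    refine ⟨s, hs0, ?_⟩
    rw [← hs]; simp; ring
  have h3 : z - w = 0 := by simpa using h2
  have h4 : 2 * z = 0 := by linear_combination h1 + h3
  simpa using h4

lemma aux_trace_ideal (τ : A →ₗ[ℂ] ℂ) (hτ : IsTracialState τ) :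
    IsClosedTwoSidedIdeal {a : A | τ (star a * a) = 0} := by
  have hcont := hτ.1
  refine ⟨isClosed_eq (hcont.comp ((continuous_star).mul continuous_id)) continuous_const,
    by simp, ?_, ?_, ?_⟩
  · intro a ha b hb
    rw [mem_setOf_eq, aux_trace_iff τ hτ] at *
    intro x
    rw [mul_add, map_add, ha, hb, add_zero]
  · intro a ha
    simpa using ha
  · intro a ha x
    simp only [mem_setOf_eq, aux_trace_iff τ hτ] at *
    refine ⟨fun y => ?_, fun y => ?_⟩
    · rw [← mul_assoc]; exact ha _
    · rw [← mul_assoc, hτ.2.2.1, ← mul_assoc]; exact ha _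

lemma aux_trace_wander (D : CrossedProductData G A) [Infinite G] (hfree : FreeAction G)
    (Y : Set T1) (hY : IsMinimalSet G Y) (τ : A →ₗ[ℂ] ℂ) (hτ : IsTracialState τ)
    (x : T1) (hx : x ∉ Y) :
    ∃ f : C(T1, ℂ), f x ≠ 0 ∧ τ (star (D.iota f) * D.iota f) = 0 := by
  obtain ⟨C, hCo, hxC, hH⟩ := aux_wander D.cont_smul hfree Y hY.1 hY.2.1 hY.2.2.1 x hx
  obtain ⟨h, h0, h1, h01⟩ := exists_continuous_zero_one_of_isClosed hCo.isClosed_compl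
    (isClosed_singleton (x := x)) (by simpa using hxC)
  set f : C(T1, ℂ) := ⟨fun y => (h y : ℂ), by fun_prop⟩ with hf
  refine ⟨f, ?_, ?_⟩
  · have : h x = 1 := h1 rfl
    simp [hf, this]
  obtain ⟨r, hr0, hr⟩ := hτ.2.2.2 (D.iota f)
  have hinv : ∀ g : G, τ (star (D.iota (auxTr D g⁻¹ f)) * D.iota (auxTr D g⁻¹ f)) = r := by
    intro g
    have e : star (D.iota (auxTr D g⁻¹ f)) * D.iota (auxTr D g⁻¹ f) =
        D.lam g * (star (D.iota f) * D.iota f) * D.lam g⁻¹ := by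
      rw [← map_star, ← map_star, ← map_mul, ← map_mul, aux_comm, mul_assoc, ← D.lam_mul,
        mul_inv_cancel, D.lam_one, mul_one]
      rfl
    rw [e, hτ.2.2.1, ← mul_assoc, ← D.lam_mul, inv_mul_cancel, D.lam_one, one_mul, hr]
  have hN : ∀ N : ℕ, N * r ≤ 1 := by
    intro N
    obtain ⟨F, hFc, hF⟩ := aux_indep _ hH N
    have hsum : ∀ y : T1, ∑ g ∈ F, (h (g⁻¹ • y)) ^ 2 ≤ 1 := by
      intro y
      by_cases hex : ∃ g ∈ F, g⁻¹ • y ∈ C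
      · obtain ⟨g, hg, hgy⟩ := hex
        rw [Finset.sum_eq_single_of_mem g hg]
        · have := h01 (g⁻¹ • y)
          exact pow_le_one₀ this.1 this.2
        · intro k hk hkg
          have : k⁻¹ • y ∉ C := by
            intro hky
            refine hF k hk g hg hkg ⟨g⁻¹ • y, hgy, ?_⟩
            rw [mul_smul, smul_inv_smul]; exact hky
          have : h (k⁻¹ • y) = 0 := h0 this
          simp [this]
      · push Not at hex
        rw [Finset.sum_eq_zero]
        · exact zero_le_one
        · intro g hg
          have : h (g⁻¹ • y) = 0 := h0 (hex g hg)
          simp [this]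
    have hc : Continuous fun y : T1 => ∑ g ∈ F, (h (g⁻¹ • y)) ^ 2 :=
      continuous_finset_sum _ fun g _ => (h.continuous.comp (D.cont_smul g⁻¹)).pow 2
    set k : C(T1, ℂ) := ⟨fun y => ((Real.sqrt (1 - ∑ g ∈ F, (h (g⁻¹ • y)) ^ 2) : ℝ) : ℂ),
      Complex.continuous_ofReal.comp (Real.continuous_sqrt.comp (continuous_const.sub hc))⟩ with hk
    obtain ⟨s, hs0, hs⟩ := hτ.2.2.2 (D.iota k)
    have e1 : star k * k + ∑ g ∈ F, star (auxTr D g⁻¹ f) * auxTr D g⁻¹ f = 1 := by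
      ext y
      simp only [ContinuousMap.add_apply, ContinuousMap.mul_apply, ContinuousMap.star_apply,
        ContinuousMap.sum_apply, auxTr_apply, hk, hf, ContinuousMap.coe_mk, RCLike.star_def,
        Complex.conj_ofReal, ContinuousMap.one_apply]
      rw [← Complex.ofReal_mul, Real.mul_self_sqrt (by linarith [hsum y])]
      push_cast
      simp only [sq]
      ring
    have e2 := congrArg (fun q => τ (D.iota q)) e1
    simp only [map_add, map_sum, map_mul, map_star, map_one, hτ.2.1, hs, hinv] at e2
    rw [Finset.sum_const, hFc, nsmul_eq_mul] at e2
    have e3 : s + N * r = 1 := by exact_mod_cast e2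
    linarith
  have : r = 0 := by
    by_contra hne
    have hpos : 0 < r := lt_of_le_of_ne hr0 (Ne.symm hne)
    obtain ⟨N, hN'⟩ := exists_nat_gt (1 / r)
    have := hN N
    rw [div_lt_iff₀ hpos] at hN'
    linarith
  rw [hr, this]; simp

lemma aux_trace_mem (D : CrossedProductData G A) [Infinite G] (hfree : FreeAction G)
    (Y : Set T1) (hY : IsMinimalSet G Y) (τ : A →ₗ[ℂ] ℂ) (hτ : IsTracialState τ)
    (f : C(T1, ℂ)) (hf : ∀ y ∈ Y, f y = 0) : D.iota f ∈ {a : A | τ (star a * a) = 0} := by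
  have hS := aux_trace_ideal τ hτ
  set S := {a : A | τ (star a * a) = 0} with hSdef
  let I : Ideal C(T1, ℂ) :=
      { carrier := {f | D.iota f ∈ S}
        add_mem' := fun {a b} ha hb => by
          show D.iota (a + b) ∈ S
          rw [map_add]; exact hS.2.2.1 _ ha _ hb
        zero_mem' := by show D.iota 0 ∈ S; rw [map_zero]; exact hS.2.1
        smul_mem' := fun c f hf => by
          show D.iota (c * f) ∈ S
          rw [map_mul]; exact (hS.2.2.2.2 _ hf _).1 }
  have hIc : IsClosed (I : Set C(T1, ℂ)) := hS.1.preimage (aux_iota_cont D)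
  have h1 : ContinuousMap.idealOfSet ℂ (ContinuousMap.setOfIdeal I) = I := by
    rw [ContinuousMap.idealOfSet_ofIdeal_eq_closure]
    exact SetLike.coe_injective (by rw [Ideal.coe_closure, hIc.closure_eq])
  have h2 : f ∈ ContinuousMap.idealOfSet ℂ (ContinuousMap.setOfIdeal I) := by
    rw [ContinuousMap.mem_idealOfSet]
    intro x hx
    by_cases hxY : x ∈ Y
    · exact hf x hxY
    · obtain ⟨q, hq, hq0⟩ := aux_trace_wander D hfree Y hY τ hτ x hxY
      exact absurd (ContinuousMap.mem_setOfIdeal.2 ⟨q, hq0, hq⟩) hx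
  rw [h1] at h2
  exact h2

lemma aux_ideal_le (D : CrossedProductData G A) (hfree : FreeAction G)
    (Y : Set T1) (hYuniq : ∀ Z : Set T1, IsMinimalSet G Z → Z = Y)
    {I S : Set A} (hI : IsClosedTwoSidedIdeal I) (hne : I ≠ Set.univ)
    (hS : IsClosedTwoSidedIdeal S)
    (hYS : {a : A | ∃ f : C(T1, ℂ), (∀ y ∈ Y, f y = 0) ∧ a = D.iota f} ⊆ S) : I ⊆ S := by
  intro a ha
  refine aux_fourier D hS a fun g h => hYS ⟨_, ?_, rfl⟩
  refine aux_vanish D Y hYuniq hI hne (aux_E_mem D hfree hI ?_)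
  exact (hI.2.2.2.2 _ (hI.2.2.2.2 _ ha _).1 _).2

end

/-- for a free Denjoy action of a countably infinite discrete
abelian group, in `A = C(𝕋) ⋊ G` with unique tracial state `τ`, the trace ideal
`J_τ = {a : τ(a*a) = 0}` equals the closed two-sided ideal generated by the functions
vanishing on the unique minimal set `Y` (i.e. `C₀(𝕋\Y) ⋊ G`), and this is the unique
maximal proper closed two-sided ideal of `A`. -/
theorem statement17 (G : Type*) [CommGroup G] [Countable G] [Infinite G]
    [MulAction G T1]
    {A : Type*} [NormedRing A] [StarRing A] [CStarRing A] [NormedAlgebra ℂ A]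
    [StarModule ℂ A] [CompleteSpace A]
    (D : CrossedProductData G A)
    (hD : IsDenjoy G) (hfree : FreeAction G)
    (Y : Set T1) (hY : IsMinimalSet G Y)
    (hYuniq : ∀ Z : Set T1, IsMinimalSet G Z → Z = Y) (hYproper : Y ≠ Set.univ)
    (τ : A →ₗ[ℂ] ℂ) (hτ : IsTracialState τ)
    (hτuniq : ∀ σ : A →ₗ[ℂ] ℂ, IsTracialState σ → σ = τ) :
    {a : A | τ (star a * a) = 0} =
      ⋂₀ {S : Set A | IsClosedTwoSidedIdeal S ∧
        {a : A | ∃ f : C(T1, ℂ), (∀ y ∈ Y, f y = 0) ∧ a = D.iota f} ⊆ S} ∧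
    IsClosedTwoSidedIdeal {a : A | τ (star a * a) = 0} ∧
    {a : A | τ (star a * a) = 0} ≠ Set.univ ∧
    ∀ S : Set A, IsClosedTwoSidedIdeal S → S ≠ Set.univ →
      S ⊆ {a : A | τ (star a * a) = 0} := by
  have hJ := aux_trace_ideal τ hτ
  have hJne : {a : A | τ (star a * a) = 0} ≠ Set.univ := by
    intro h
    have h1 : (1 : A) ∈ {a : A | τ (star a * a) = 0} := by rw [h]; trivial
    simp [hτ.2.1] at h1
  have hYJ : {a : A | ∃ f : C(T1, ℂ), (∀ y ∈ Y, f y = 0) ∧ a = D.iota f} ⊆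
      {a : A | τ (star a * a) = 0} := by
    rintro _ ⟨f, hf, rfl⟩
    exact aux_trace_mem D hfree Y hY τ hτ f hf
  refine ⟨Set.Subset.antisymm ?_ ?_, hJ, hJne, ?_⟩
  · rintro a ha S ⟨hS, hYS⟩
    exact aux_ideal_le D hfree Y hYuniq hJ hJne hS hYS ha
  · exact Set.sInter_subset_of_mem ⟨hJ, hYJ⟩
  · intro S hS hne
    exact aux_ideal_le D hfree Y hYuniq hS hne hJ hYJ
end
end

section
/- Let G ↷ 𝕋 be a free action of a countably infinite discrete abelian group, with unique invariant probability measure μ. Then the crossed product C(𝕋) ⋊ G has a unique tracial state τ, given on generators by τ(f λ_g) = ∫_𝕋 f dμ when g = e and τ(f λ_g) = 0 when g ≠ e; moreover τ is faithful if and only if the action is minimal. -/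
open MeasureTheory Topology Filter Set Function

noncomputable section

variable (G : Type*) [Group G] [MulAction G T1]

variable {G}

/-- States on `C(𝕋, ℝ)` that vanish on functions vanishing on `Z`. -/
structure IsStateOn (Z : Set T1) (m : C(T1, ℝ) →ₗ[ℝ] ℝ) : Prop where
  pos : ∀ f : C(T1, ℝ), (∀ x, 0 ≤ f x) → 0 ≤ m f
  one : m 1 = 1
  van : ∀ f : C(T1, ℝ), (∀ x ∈ Z, f x = 0) → m f = 0

theorem IsStateOn.bound {Z : Set T1} {m : C(T1, ℝ) →ₗ[ℝ] ℝ} (h : IsStateOn Z m)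
    (f : C(T1, ℝ)) : m f ∈ Set.Icc (-‖f‖) ‖f‖ := by
  have h1 : 0 ≤ m (‖f‖ • (1 : C(T1, ℝ)) - f) := h.pos _ fun x => by
    have := (abs_le.1 (f.norm_coe_le_norm x)).2
    simpa using this
  have h2 : 0 ≤ m (‖f‖ • (1 : C(T1, ℝ)) + f) := h.pos _ fun x => by
    have := (abs_le.1 (f.norm_coe_le_norm x)).1
    simp
    linarith
  rw [map_sub, map_smul, h.one] at h1
  rw [map_add, map_smul, h.one] at h2
  simp only [smul_eq_mul, mul_one] at h1 h2
  exact ⟨by linarith, by linarith⟩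

theorem IsStateOn.ultralimit {Z : Set T1} {ι : Type*} (U : Ultrafilter ι)
    (m : ι → C(T1, ℝ) →ₗ[ℝ] ℝ) (h : ∀ i, IsStateOn Z (m i)) :
    ∃ m' : C(T1, ℝ) →ₗ[ℝ] ℝ, IsStateOn Z m' ∧
      ∀ f, Tendsto (fun i => m i f) U (𝓝 (m' f)) := by
  have key : ∀ f : C(T1, ℝ), ∃ y : ℝ, Tendsto (fun i => m i f) U (𝓝 y) := by
    intro f
    have hc : IsCompact (Set.Icc (-‖f‖) ‖f‖) := isCompact_Icc
    obtain ⟨y, -, hy⟩ := hc.ultrafilter_le_nhds (U.map fun i => m i f) (by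
      rw [le_principal_iff]
      exact Filter.mem_map.2 (Filter.univ_mem' fun i => (h i).bound f))
    exact ⟨y, hy⟩
  choose L hL using key
  refine ⟨{ toFun := L, map_add' := ?_, map_smul' := ?_ }, ⟨?_, ?_, ?_⟩, hL⟩
  · intro f g
    refine tendsto_nhds_unique (hL (f + g)) ?_
    simpa using (hL f).add (hL g)
  · intro c f
    refine tendsto_nhds_unique (hL (c • f)) ?_
    simpa using (hL f).const_mul c
  · intro f hf
    exact ge_of_tendsto' (hL f) fun i => (h i).pos f hf
  · refine tendsto_nhds_unique (hL 1) ?_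
    simp only [(h _).one]
    exact tendsto_const_nhds
  · intro f hf
    refine tendsto_nhds_unique (hL f) ?_
    simp only [(h _).van f hf]
    exact tendsto_const_nhds

/-- Translation as a continuous map. -/
def trMap {H : Type*} [Group H] [MulAction H T1]
    (hc : ∀ g : H, Continuous fun x : T1 => g • x) (g : H) : C(T1, T1) :=
  ⟨fun x => g • x, hc g⟩

theorem exists_invariant_step {H : Type*} [CommGroup H] [MulAction H T1]
    (hc : ∀ g : H, Continuous fun x : T1 => g • x) {Z : Set T1} (hZ : InvariantSet H Z)
    (m : C(T1, ℝ) →ₗ[ℝ] ℝ) (hm : IsStateOn Z m) (g : H) :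
    ∃ m' : C(T1, ℝ) →ₗ[ℝ] ℝ, IsStateOn Z m' ∧ (∀ f, m' (f.comp (trMap hc g)) = m' f) ∧
      ∀ k : H, (∀ f, m (f.comp (trMap hc k)) = m f) → ∀ f, m' (f.comp (trMap hc k)) = m' f := by
  let A : ℕ → C(T1, ℝ) →ₗ[ℝ] ℝ := fun n =>
    { toFun := fun f => ((n : ℝ) + 1)⁻¹ * ∑ k ∈ Finset.range (n + 1), m (f.comp (trMap hc (g ^ k)))
      map_add' := by
        intro f f'
        simp only [ContinuousMap.add_comp, map_add, Finset.sum_add_distrib, mul_add]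
      map_smul' := by
        intro c f
        simp only [ContinuousMap.smul_comp, map_smul, smul_eq_mul, ← Finset.mul_sum, RingHom.id_apply]
        ring }
  have hAd : ∀ n f, A n f = ((n : ℝ) + 1)⁻¹ *
      ∑ k ∈ Finset.range (n + 1), m (f.comp (trMap hc (g ^ k))) := fun _ _ => rfl
  have hA : ∀ n, IsStateOn Z (A n) := by
    intro n
    have hn : (0 : ℝ) < (n : ℝ) + 1 := by positivity
    refine ⟨?_, ?_, ?_⟩
    · intro f hf
      rw [hAd]
      exact mul_nonneg (by positivity) (Finset.sum_nonneg fun k _ => hm.pos _ fun x => hf _)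
    · rw [hAd]
      simp only [ContinuousMap.one_comp, hm.one]
      simp
      field_simp
    · intro f hf
      rw [hAd, Finset.sum_eq_zero, mul_zero]
      intro k _
      exact hm.van _ fun x hx => hf _ (hZ _ x hx)
  obtain ⟨m', hm', hL⟩ := IsStateOn.ultralimit (Ultrafilter.of (atTop : Filter ℕ)) A hA
  have hU : ((Ultrafilter.of (atTop : Filter ℕ) : Ultrafilter ℕ) : Filter ℕ) ≤ atTop :=
    Ultrafilter.of_le _
  refine ⟨m', hm', ?_, ?_⟩
  · intro f
    have h1 := (hL (f.comp (trMap hc g))).sub (hL f)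
    have h2 : Tendsto (fun n : ℕ => A n (f.comp (trMap hc g)) - A n f)
        (Ultrafilter.of (atTop : Filter ℕ) : Ultrafilter ℕ) (𝓝 0) := by
      refine Tendsto.mono_left ?_ hU
      have h3 : ∀ n, A n (f.comp (trMap hc g)) - A n f =
          ((n : ℝ) + 1)⁻¹ * (m (f.comp (trMap hc (g ^ (n + 1)))) - m (f.comp (trMap hc (g ^ 0)))) := by
        intro n
        rw [hAd, hAd, ← mul_sub, ← Finset.sum_sub_distrib,
          ← Finset.sum_range_sub (fun k => m (f.comp (trMap hc (g ^ k))))]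
        congr 1
        refine Finset.sum_congr rfl fun k _ => ?_
        congr 2
        ext x
        simp [trMap, pow_succ', mul_smul]
      simp only [h3]
      have h4 : Tendsto (fun n : ℕ => ((n : ℝ) + 1)⁻¹ * (2 * ‖f‖)) atTop (𝓝 0) := by
        have := (tendsto_one_div_add_atTop_nhds_zero_nat (𝕜 := ℝ)).mul_const (2 * ‖f‖)
        simpa using this
      refine squeeze_zero_norm (fun n => ?_) h4
      rw [norm_mul, Real.norm_of_nonneg (by positivity : (0 : ℝ) ≤ ((n : ℝ) + 1)⁻¹)]
      refine mul_le_mul_of_nonneg_left ?_ (by positivity)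
      have hb : ∀ k : H, |m (f.comp (trMap hc k))| ≤ ‖f‖ := by
        intro k
        refine (abs_le.2 (hm.bound _)).trans ?_
        rw [ContinuousMap.norm_le _ (norm_nonneg _)]
        exact fun x => f.norm_coe_le_norm _
      rw [Real.norm_eq_abs]
      refine (abs_sub _ _).trans ?_
      linarith [hb (g ^ (n + 1)), hb (g ^ 0)]
    have := tendsto_nhds_unique h1 h2
    linarith
  · intro k hk f
    refine tendsto_nhds_unique (hL _) ?_
    refine (hL f).congr fun n => ?_
    rw [hAd, hAd]
    congr 1
    refine Finset.sum_congr rfl fun j _ => ?_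
    rw [← hk (f.comp (trMap hc (g ^ j)))]
    congr 1
    ext x
    simp only [trMap, ContinuousMap.comp_apply, ContinuousMap.coe_mk, ← mul_smul]
    rw [mul_comm]

theorem exists_invariant_state {H : Type*} [CommGroup H] [MulAction H T1]
    (hc : ∀ g : H, Continuous fun x : T1 => g • x) {Z : Set T1} (hZ : InvariantSet H Z)
    (hne : Z.Nonempty) :
    ∃ m : C(T1, ℝ) →ₗ[ℝ] ℝ, IsStateOn Z m ∧ ∀ g f, m (f.comp (trMap hc g)) = m f := by
  classical
  have fin : ∀ s : Finset H, ∃ m : C(T1, ℝ) →ₗ[ℝ] ℝ, IsStateOn Z m ∧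
      ∀ g ∈ s, ∀ f, m (f.comp (trMap hc g)) = m f := by
    intro s
    induction s using Finset.induction_on with
    | empty =>
      obtain ⟨x, hx⟩ := hne
      refine ⟨{ toFun := fun f => f x, map_add' := fun _ _ => rfl, map_smul' := fun _ _ => rfl },
        ⟨fun f hf => hf x, rfl, fun f hf => hf x hx⟩, by simp⟩
    | insert g s _ ih =>
      obtain ⟨m, hm, hs⟩ := ih
      obtain ⟨m', hm', hg, hk⟩ := exists_invariant_step hc hZ m hm g
      refine ⟨m', hm', fun k hks => ?_⟩
      rcases Finset.mem_insert.1 hks with rfl | h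
      · exact hg
      · exact hk k (hs k h)
  choose M hM hinv using fin
  obtain ⟨m, hm, hL⟩ := IsStateOn.ultralimit (Ultrafilter.of (atTop : Filter (Finset H))) M hM
  have hU : ((Ultrafilter.of (atTop : Filter (Finset H)) : Ultrafilter _) : Filter (Finset H)) ≤ atTop :=
    Ultrafilter.of_le _
  refine ⟨m, hm, fun g f => ?_⟩
  refine tendsto_nhds_unique (hL _) ((hL f).congr' ?_)
  refine hU ?_
  filter_upwards [eventually_ge_atTop ({g} : Finset H)] with s hs
  exact (hinv s g (hs (by simp)) f).symm

theorem state_eq_integral {H : Type*} [Group H] [MulAction H T1]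
    (hc : ∀ g : H, Continuous fun x : T1 => g • x)
    (μ : Measure T1)
    (hμuniq : ∀ ν : Measure T1, IsProbabilityMeasure ν → ν.Regular →
      (∀ g : H, Measure.map (fun x : T1 => g • x) ν = ν) → ν = μ)
    (m : C(T1, ℝ) →ₗ[ℝ] ℝ) (hpos : ∀ f : C(T1, ℝ), (∀ x, 0 ≤ f x) → 0 ≤ m f)
    (hone : m 1 = 1) (hinv : ∀ g f, m (f.comp (trMap hc g)) = m f) (f : C(T1, ℝ)) :
    m f = ∫ x, f x ∂μ := by
  let L0 : CompactlySupportedContinuousMap T1 ℝ →ₗ[ℝ] ℝ :=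
    { toFun := fun f => m f.toContinuousMap
      map_add' := fun f g => m.map_add f.toContinuousMap g.toContinuousMap
      map_smul' := fun c f => m.map_smul c f.toContinuousMap }
  let Λ : CompactlySupportedContinuousMap T1 ℝ →ₚ[ℝ] ℝ :=
    PositiveLinearMap.mk₀ L0 (fun f hf => hpos _ fun x => hf x)
  have hint : ∀ f : C(T1, ℝ), ∫ x, f x ∂(RealRMK.rieszMeasure Λ) = m f := fun f =>
    RealRMK.integral_rieszMeasure Λ (CompactlySupportedContinuousMap.continuousMapEquiv f)
  set ν := RealRMK.rieszMeasure Λ with hν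
  have : ν.Regular := RealRMK.regular_rieszMeasure Λ
  have hfin : IsFiniteMeasure ν := inferInstance
  have h1 : IsProbabilityMeasure ν := by
    have := hint 1
    rw [hone] at this
    simp at this
    constructor
    rw [Measure.real, ENNReal.toReal_eq_one_iff] at this
    exact this
  have : ν = μ := by
    refine hμuniq ν h1 inferInstance fun g => ?_
    have hmg : Measurable (fun x : T1 => g • x) := (hc g).measurable
    have : IsProbabilityMeasure (Measure.map (fun x : T1 => g • x) ν) :=
      Measure.isProbabilityMeasure_map hmg.aemeasurable
    refine ext_of_forall_integral_eq_of_IsFiniteMeasure fun f => ?_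
    rw [integral_map hmg.aemeasurable f.continuous.aestronglyMeasurable]
    have := hinv g f.toContinuousMap
    rw [← hint, ← hint] at this
    exact this
  rw [← this, hint]

namespace CrossedProductData

variable {H : Type*} [Group H] [MulAction H T1] {A : Type*}
    [NormedRing A] [StarRing A] [CStarRing A] [NormedAlgebra ℂ A]
    [StarModule ℂ A] [CompleteSpace A] (D : CrossedProductData H A)

/-- The induced action on functions. -/
def act (g : H) (f : C(T1, ℂ)) : C(T1, ℂ) := f.comp (trMap D.cont_smul g⁻¹)

theorem act_apply (g : H) (f : C(T1, ℂ)) (x : T1) : D.act g f x = f (g⁻¹ • x) := rfl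

theorem star_lam (g : H) : star (D.lam g) = D.lam g⁻¹ := by
  have h1 : star (D.lam g) * D.lam g = 1 := (Unitary.mem_iff.1 (D.lam_unitary g)).1
  have h2 : D.lam g * D.lam g⁻¹ = 1 := by rw [← D.lam_mul, mul_inv_cancel, D.lam_one]
  exact left_inv_eq_right_inv h1 h2

theorem lam_inv_mul (g : H) : D.lam g⁻¹ * D.lam g = 1 := by
  rw [← D.lam_mul, inv_mul_cancel, D.lam_one]

theorem lam_iota (g : H) (f : C(T1, ℂ)) :
    D.lam g * D.iota f = D.iota (D.act g f) * D.lam g := by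
  have h := D.covariance g f
  rw [D.star_lam] at h
  change D.lam g * D.iota f * D.lam g⁻¹ = D.iota (D.act g f) at h
  rw [← h, mul_assoc, D.lam_inv_mul, mul_one]

theorem gen_mul (f f' : C(T1, ℂ)) (g h : H) :
    D.iota f * D.lam g * (D.iota f' * D.lam h) = D.iota (f * D.act g f') * D.lam (g * h) := by
  rw [map_mul, D.lam_mul]
  calc D.iota f * D.lam g * (D.iota f' * D.lam h)
      = D.iota f * (D.lam g * D.iota f') * D.lam h := by simp only [mul_assoc]
    _ = _ := by rw [D.lam_iota]; simp only [mul_assoc]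

theorem E_one_gen (f : C(T1, ℂ)) : D.E (D.iota f * D.lam 1) = f := by
  rw [D.lam_one, mul_one, D.E_diag]

theorem dense_span : Dense (Submodule.span ℂ
    {a : A | ∃ (f : C(T1, ℂ)) (g : H), a = D.iota f * D.lam g} : Set A) := by
  rw [dense_iff_closure_eq]
  exact D.generates

theorem lin_ext (L L' : A →ₗ[ℂ] ℂ) (hL : Continuous L) (hL' : Continuous L')
    (h : ∀ f g, L (D.iota f * D.lam g) = L' (D.iota f * D.lam g)) : L = L' := by
  have : (⟨L, hL⟩ : A →L[ℂ] ℂ) = ⟨L', hL'⟩ := by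
    refine ContinuousLinearMap.ext_on D.dense_span ?_
    rintro a ⟨f, g, rfl⟩
    exact h f g
  ext a
  exact congrArg (fun M : A →L[ℂ] ℂ => M a) this

theorem trace_of_gens (L : A →ₗ[ℂ] ℂ) (hL : Continuous L)
    (h : ∀ f g f' g', L (D.iota f * D.lam g * (D.iota f' * D.lam g')) =
      L (D.iota f' * D.lam g' * (D.iota f * D.lam g))) (a b : A) : L (a * b) = L (b * a) := by
  have h1 : ∀ f g (b : A), L (D.iota f * D.lam g * b) = L (b * (D.iota f * D.lam g)) := by
    intro f g b
    have := D.lin_ext (L ∘ₗ LinearMap.mulLeft ℂ (D.iota f * D.lam g))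
      (L ∘ₗ LinearMap.mulRight ℂ (D.iota f * D.lam g))
      (hL.comp (continuous_const.mul continuous_id)) (hL.comp (continuous_id.mul continuous_const))
      (fun f' g' => h f g f' g')
    exact congrArg (fun M : A →ₗ[ℂ] ℂ => M b) this
  have := D.lin_ext (L ∘ₗ LinearMap.mulRight ℂ b)
      (L ∘ₗ LinearMap.mulLeft ℂ b)
      (hL.comp (continuous_id.mul continuous_const)) (hL.comp (continuous_const.mul continuous_id))
      (fun f' g' => h1 f' g' b)
  exact congrArg (fun M : A →ₗ[ℂ] ℂ => M a) this

theorem exists_finsupp (a : A) (ha : a ∈ Submodule.span ℂ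
    {a : A | ∃ (f : C(T1, ℂ)) (g : H), a = D.iota f * D.lam g}) :
    ∃ F : H →₀ C(T1, ℂ), a = ∑ g ∈ F.support, D.iota (F g) * D.lam g := by
  let Φ : (H →₀ C(T1, ℂ)) →ₗ[ℂ] A :=
    Finsupp.lsum ℂ fun g => LinearMap.mulRight ℂ (D.lam g) ∘ₗ (D.iota : C(T1, ℂ) →ₗ[ℂ] A)
  have h : Submodule.span ℂ {a : A | ∃ (f : C(T1, ℂ)) (g : H), a = D.iota f * D.lam g} ≤
      LinearMap.range Φ := by
    rw [Submodule.span_le]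
    rintro a ⟨f, g, rfl⟩
    exact ⟨Finsupp.single g f, by simp [Φ]⟩
  obtain ⟨F, rfl⟩ := h ha
  exact ⟨F, by simp [Φ, Finsupp.sum]⟩

theorem E_cross (f f' : C(T1, ℂ)) (g h : H) [Decidable (g = h)] :
    D.E (star (D.iota f * D.lam g) * (D.iota f' * D.lam h)) =
      if g = h then D.act g⁻¹ (star f * f') else 0 := by
  have : star (D.iota f * D.lam g) * (D.iota f' * D.lam h) =
      D.iota (D.act g⁻¹ (star f * f')) * D.lam (g⁻¹ * h) := by
    rw [star_mul, D.star_lam, ← map_star, D.lam_mul]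
    calc D.lam g⁻¹ * D.iota (star f) * (D.iota f' * D.lam h)
        = D.lam g⁻¹ * (D.iota (star f) * D.iota f') * D.lam h := by simp only [mul_assoc]
      _ = _ := by rw [← map_mul, D.lam_iota]; simp only [mul_assoc]
  rw [this]
  split_ifs with hgh
  · subst hgh
    rw [inv_mul_cancel, D.E_one_gen]
  · exact D.E_off _ _ fun h' => hgh (inv_mul_eq_one.1 h')

theorem E_nonneg (a : A) (x : T1) :
    0 ≤ (D.E (star a * a) x).re ∧ (D.E (star a * a) x).im = 0 := by
  classical
  have hcont : Continuous fun a : A => D.E (star a * a) x :=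
    (continuous_eval_const (F := C(T1, ℂ)) x).comp
      (D.E_cont.comp (continuous_star.mul continuous_id))
  have hcl : IsClosed {a : A | 0 ≤ (D.E (star a * a) x).re ∧ (D.E (star a * a) x).im = 0} :=
    (isClosed_le continuous_const (Complex.continuous_re.comp hcont)).inter
      (isClosed_eq (Complex.continuous_im.comp hcont) continuous_const)
  refine (D.dense_span.closure_eq ▸ closure_minimal ?_ hcl :
    (Set.univ : Set A) ⊆ _) (Set.mem_univ a)
  intro b hb
  obtain ⟨F, rfl⟩ := D.exists_finsupp b hb
  have : D.E (star (∑ g ∈ F.support, D.iota (F g) * D.lam g) *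
      ∑ g ∈ F.support, D.iota (F g) * D.lam g) =
      ∑ g ∈ F.support, D.act g⁻¹ (star (F g) * F g) := by
    rw [star_sum, Finset.sum_mul_sum, map_sum]
    refine Finset.sum_congr rfl fun g hg => ?_
    rw [map_sum]
    simp only [D.E_cross]
    rw [Finset.sum_ite_eq, if_pos hg]
  have h2 : D.E (star (∑ g ∈ F.support, D.iota (F g) * D.lam g) *
      ∑ g ∈ F.support, D.iota (F g) * D.lam g) x =
      ((∑ g ∈ F.support, Complex.normSq (F g (g • x)) : ℝ) : ℂ) := by
    rw [this, ContinuousMap.sum_apply, Complex.ofReal_sum]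
    refine Finset.sum_congr rfl fun g _ => ?_
    rw [D.act_apply, inv_inv, Complex.normSq_eq_conj_mul_self]
    rfl
  simp only [Set.mem_ofPred_eq]
  rw [h2]
  exact ⟨by rw [Complex.ofReal_re]; exact Finset.sum_nonneg fun _ _ => Complex.normSq_nonneg _,
    Complex.ofReal_im _⟩

/-- The canonical trace. -/
def canTrace (μ : Measure T1) [IsProbabilityMeasure μ] : A →ₗ[ℂ] ℂ where
  toFun a := ∫ x, D.E a x ∂μ
  map_add' a b := by
    have hi : ∀ f : C(T1, ℂ), Integrable f μ := fun f =>
      f.continuous.integrable_of_hasCompactSupport (HasCompactSupport.of_compactSpace f)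
    rw [← integral_add (hi _) (hi _), map_add]
    rfl
  map_smul' c a := by
    rw [map_smul, RingHom.id_apply, ← integral_smul]
    rfl

theorem canTrace_apply (μ : Measure T1) [IsProbabilityMeasure μ] (a : A) :
    D.canTrace μ a = ∫ x, D.E a x ∂μ := rfl

theorem integral_act (μ : Measure T1)
    (hμinv : ∀ g : H, Measure.map (fun x : T1 => g • x) μ = μ) (g : H) (f : C(T1, ℂ)) :
    ∫ x, D.act g f x ∂μ = ∫ x, f x ∂μ := by
  conv_rhs => rw [← hμinv g⁻¹]
  rw [integral_map (D.cont_smul _).measurable.aemeasurable f.continuous.aestronglyMeasurable]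
  rfl

theorem canTrace_tracial (μ : Measure T1) [IsProbabilityMeasure μ]
    (hμinv : ∀ g : H, Measure.map (fun x : T1 => g • x) μ = μ) :
    IsTracialState (D.canTrace μ) := by
  have hi : ∀ f : C(T1, ℂ), Integrable f μ := fun f =>
      f.continuous.integrable_of_hasCompactSupport (HasCompactSupport.of_compactSpace f)
  have hc : Continuous (D.canTrace μ) := by
    have : Continuous fun f : C(T1, ℂ) => ∫ x, f x ∂μ := by
      refine (LipschitzWith.of_dist_le_mul (K := 1) fun f f' => ?_).continuous
      rw [dist_eq_norm, dist_eq_norm, ← integral_sub (hi f) (hi f')]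
      have := norm_integral_le_of_norm_le_const (μ := μ) (f := fun x => f x - f' x)
        (Filter.Eventually.of_forall fun x => (f - f').norm_coe_le_norm x)
      simpa using this
    exact this.comp D.E_cont
  refine ⟨hc, ?_, D.trace_of_gens _ hc ?_, ?_⟩
  · rw [canTrace_apply, ← map_one D.iota, D.E_diag]
    simp
  · intro f g f' g'
    rw [D.gen_mul, D.gen_mul, canTrace_apply, canTrace_apply]
    by_cases h : g * g' = 1
    · have h' : g' * g = 1 := by rw [mul_eq_one_iff_eq_inv] at h ⊢; rw [h, inv_inv]
      rw [h, h', D.E_one_gen, D.E_one_gen, ← D.integral_act μ hμinv g (f' * D.act g' f)]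
      congr 1
      ext x
      simp only [ContinuousMap.mul_apply, D.act_apply, smul_smul]
      rw [← mul_inv_rev, h, inv_one, one_smul, mul_comm]
    · have h' : g' * g ≠ 1 := fun h' => h (by
        rw [mul_eq_one_iff_eq_inv] at h' ⊢; rw [h', inv_inv])
      rw [D.E_off _ _ h, D.E_off _ _ h']
  · intro a
    refine ⟨∫ x, (D.E (star a * a) x).re ∂μ, integral_nonneg fun x => (D.E_nonneg a x).1, ?_⟩
    rw [canTrace_apply, ← integral_complex_ofReal]
    congr 1
    ext x
    exact Complex.ext (by simp) (by simp [(D.E_nonneg a x).2])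

/-- Inclusion of real functions. -/
def cpl : C(T1, ℝ) →ₗ[ℝ] C(T1, ℂ) where
  toFun f := ⟨fun x => (f x : ℂ), by fun_prop⟩
  map_add' f g := by ext x; simp
  map_smul' c f := by ext x; simp

theorem cpl_apply (f : C(T1, ℝ)) (x : T1) : cpl f x = (f x : ℂ) := rfl

theorem trace_real_pos (τ : A →ₗ[ℂ] ℂ) (hτ : IsTracialState τ) (f : C(T1, ℝ))
    (hf : ∀ x, 0 ≤ f x) : 0 ≤ (τ (D.iota (cpl f))).re ∧ (τ (D.iota (cpl f))).im = 0 := by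
  let s : C(T1, ℝ) := ⟨fun x => Real.sqrt (f x), by fun_prop⟩
  have : cpl f = star (cpl s) * cpl s := by
    ext x
    change (f x : ℂ) = star ((Real.sqrt (f x) : ℝ) : ℂ) * ((Real.sqrt (f x) : ℝ) : ℂ)
    rw [Complex.star_def, Complex.conj_ofReal, ← Complex.ofReal_mul, Real.mul_self_sqrt (hf x)]
  obtain ⟨r, hr, h⟩ := hτ.2.2.2 (D.iota (cpl s))
  rw [this, map_mul, map_star, h]
  exact ⟨by simpa using hr, by simp⟩

theorem trace_act (τ : A →ₗ[ℂ] ℂ) (hτ : IsTracialState τ) (g : H) (f : C(T1, ℂ)) :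
    τ (D.iota (D.act g f)) = τ (D.iota f) := by
  have h : D.iota (D.act g f) = D.lam g * D.iota f * D.lam g⁻¹ := by
    rw [D.lam_iota, mul_assoc, ← D.lam_mul, mul_inv_cancel, D.lam_one, mul_one]
  rw [h, hτ.2.2.1, ← mul_assoc, D.lam_inv_mul, one_mul]

theorem trace_iota (τ : A →ₗ[ℂ] ℂ) (hτ : IsTracialState τ)
    (μ : Measure T1) [IsProbabilityMeasure μ]
    (hμuniq : ∀ ν : Measure T1, IsProbabilityMeasure ν → ν.Regular →
      (∀ g : H, Measure.map (fun x : T1 => g • x) ν = ν) → ν = μ) (f : C(T1, ℂ)) :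
    τ (D.iota f) = ∫ x, f x ∂μ := by
  let m : C(T1, ℝ) →ₗ[ℝ] ℝ :=
    { toFun := fun f => (τ (D.iota (cpl f))).re
      map_add' := fun f g => by simp only [map_add, Complex.add_re]
      map_smul' := fun c f => by
        have : cpl (c • f) = (c : ℂ) • cpl f := by
          ext x
          simp [cpl_apply]
        rw [this, map_smul, map_smul]
        simp }
  have hm1 : cpl 1 = 1 := by ext x; simp [cpl_apply]
  have hreal : ∀ f : C(T1, ℝ), τ (D.iota (cpl f)) = ∫ x, (f x : ℂ) ∂μ := by
    intro f
    have h1 : m f = ∫ x, f x ∂μ := by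
      refine state_eq_integral D.cont_smul μ hμuniq m
        (fun f hf => (D.trace_real_pos τ hτ f hf).1) ?_ ?_ f
      · change (τ (D.iota (cpl 1))).re = 1
        rw [hm1, map_one, hτ.2.1, Complex.one_re]
      · intro g f
        change (τ (D.iota (cpl (f.comp (trMap D.cont_smul g))))).re = (τ (D.iota (cpl f))).re
        rw [← D.trace_act τ hτ g⁻¹ (cpl f)]
        congr 4
        ext x
        rw [D.act_apply, inv_inv]
        rfl
    have h2 : (τ (D.iota (cpl f))).im = 0 := by
      have e : f = (f + ‖f‖ • 1) - ‖f‖ • 1 := by simp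
      rw [e, map_sub, map_sub, map_sub, Complex.sub_im,
        (D.trace_real_pos τ hτ (f + ‖f‖ • 1) fun x => ?_).2,
        (D.trace_real_pos τ hτ (‖f‖ • 1) fun x => ?_).2, sub_zero]
      · simp
      · have := (abs_le.1 (f.norm_coe_le_norm x)).1
        simp
        linarith
    rw [integral_complex_ofReal, ← h1]
    exact Complex.ext (by simp [m]) (by simp [h2])
  let fr : C(T1, ℝ) := ⟨fun x => (f x).re, by fun_prop⟩
  let fi : C(T1, ℝ) := ⟨fun x => (f x).im, by fun_prop⟩
  have hf : f = cpl fr + Complex.I • cpl fi := by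
    ext x
    change f x = ((f x).re : ℂ) + Complex.I * ((f x).im : ℂ)
    rw [mul_comm, Complex.re_add_im]
  have hi : ∀ f : C(T1, ℂ), Integrable f μ := fun f =>
      f.continuous.integrable_of_hasCompactSupport (HasCompactSupport.of_compactSpace f)
  rw [hf, map_add, map_add, map_smul, map_smul, hreal, hreal, ← integral_smul]
  exact (integral_add (hi (cpl fr)) ((hi (cpl fi)).smul Complex.I)).symm

theorem trace_off (hfree : FreeAction H) (τ : A →ₗ[ℂ] ℂ) (hτ : IsTracialState τ)
    (f : C(T1, ℂ)) (g : H) (hg : g ≠ 1) : τ (D.iota f * D.lam g) = 0 := by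
  let z : C(T1, ℂ) := ⟨fun x => (AddCircle.toCircle x : ℂ), by fun_prop⟩
  have hne : ∀ x, z x - D.act g z x ≠ 0 := by
    intro x hx
    rw [sub_eq_zero] at hx
    have h1 : AddCircle.toCircle x = AddCircle.toCircle (g⁻¹ • x) := Circle.ext hx
    have h2 := AddCircle.injective_toCircle one_ne_zero h1
    exact hg (inv_eq_one.1 (hfree _ _ h2.symm))
  have key : ∀ k : C(T1, ℂ), τ (D.iota (k * (z - D.act g z)) * D.lam g) = 0 := by
    intro k
    have h1 : D.iota (k * (z - D.act g z)) * D.lam g =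
        D.iota z * (D.iota k * D.lam g) - D.iota k * D.lam g * D.iota z := by
      rw [mul_assoc _ (D.lam g) (D.iota z), D.lam_iota, ← mul_assoc, ← mul_assoc, ← map_mul, ← map_mul,
        ← sub_mul, ← map_sub, mul_sub, mul_comm k z]
    rw [h1, map_sub, hτ.2.2.1, sub_self]
  let k : C(T1, ℂ) := ⟨fun x => f x / (z x - D.act g z x),
    f.continuous.div (z.continuous.sub (D.act g z).continuous) hne⟩
  have hk : f = k * (z - D.act g z) := by
    ext x
    change f x = f x / (z x - D.act g z x) * (z x - D.act g z x)
    rw [div_mul_cancel₀ _ (hne x)]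
  rw [hk]
  exact key k

end CrossedProductData

/-- for a free action of a countably infinite discrete abelian group
on the circle with unique invariant probability measure `μ`, the crossed product
`C(𝕋) ⋊ G` has a unique tracial state `τ`, given by `τ(f λ_g) = ∫ f dμ` for `g = e`
and `τ(f λ_g) = 0` otherwise; moreover `τ` is faithful iff the action is minimal. -/
theorem statement18 (G : Type*) [CommGroup G] [Countable G] [Infinite G]
    [MulAction G T1]
    {A : Type*} [NormedRing A] [StarRing A] [CStarRing A] [NormedAlgebra ℂ A]
    [StarModule ℂ A] [CompleteSpace A]
    (D : CrossedProductData G A)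
    (hfree : FreeAction G)
    (μ : Measure T1) [IsProbabilityMeasure μ] (hμreg : μ.Regular)
    (hμinv : ∀ g : G, Measure.map (fun x : T1 => g • x) μ = μ)
    (hμuniq : ∀ ν : Measure T1, IsProbabilityMeasure ν → ν.Regular →
      (∀ g : G, Measure.map (fun x : T1 => g • x) ν = ν) → ν = μ) :
    (∃! τ : A →ₗ[ℂ] ℂ, IsTracialState τ) ∧
    ∀ τ : A →ₗ[ℂ] ℂ, IsTracialState τ →
      (∀ f : C(T1, ℂ), τ (D.iota f) = ∫ x : T1, f x ∂μ) ∧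
      (∀ (f : C(T1, ℂ)) (g : G), g ≠ 1 → τ (D.iota f * D.lam g) = 0) ∧
      ((∀ a : A, τ (star a * a) = 0 → a = 0) ↔
        IsMinimalSet G (Set.univ : Set T1)) := by
  classical
  have hcan := D.canTrace_tracial μ hμinv
  have hform : ∀ τ : A →ₗ[ℂ] ℂ, IsTracialState τ → τ = D.canTrace μ := by
    intro τ hτ
    refine D.lin_ext _ _ hτ.1 hcan.1 fun f g => ?_
    by_cases hg : g = 1
    · subst hg
      rw [D.lam_one, mul_one, D.trace_iota τ hτ μ hμuniq, D.trace_iota _ hcan μ hμuniq]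
    · rw [D.trace_off hfree τ hτ f g hg, D.trace_off hfree _ hcan f g hg]
  refine ⟨⟨D.canTrace μ, hcan, hform⟩, fun τ hτ =>
    ⟨D.trace_iota τ hτ μ hμuniq, D.trace_off hfree τ hτ, ?_, ?_⟩⟩
  · intro hfaith
    refine ⟨Set.univ_nonempty, isClosed_univ, fun _ _ _ => Set.mem_univ _, ?_⟩
    intro Z hZne hZcl hZinv _
    obtain ⟨m, hm, hminv⟩ := exists_invariant_state D.cont_smul hZinv hZne
    let d : C(T1, ℝ) := ⟨fun x => Metric.infDist x Z, Metric.continuous_infDist_pt Z⟩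
    have h0 : ∫ x, (d * d) x ∂μ = 0 := by
      rw [← state_eq_integral D.cont_smul μ hμuniq m hm.pos hm.one hminv]
      refine hm.van _ fun x hx => ?_
      have : d x = 0 := Metric.infDist_zero_of_mem hx
      rw [ContinuousMap.mul_apply, this, zero_mul]
    have h1 : D.iota (CrossedProductData.cpl d) = 0 := by
      refine hfaith _ ?_
      rw [← map_star, ← map_mul, D.trace_iota τ hτ μ hμuniq]
      have : ∀ x, (star (CrossedProductData.cpl d) * CrossedProductData.cpl d) x =
          (((d * d) x : ℝ) : ℂ) := by
        intro x
        change star ((d x : ℝ) : ℂ) * ((d x : ℝ) : ℂ) = ((d x * d x : ℝ) : ℂ)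
        rw [Complex.star_def, Complex.conj_ofReal, Complex.ofReal_mul]
      simp only [this]
      rw [integral_complex_ofReal, h0, Complex.ofReal_zero]
    have h2 : CrossedProductData.cpl d = 0 := D.iota_injective (by rw [h1, map_zero])
    refine Set.eq_univ_of_forall fun x => ?_
    have h3 : ((d x : ℝ) : ℂ) = 0 := congrArg (fun k : C(T1, ℂ) => k x) h2
    rw [hZcl.mem_iff_infDist_zero hZne]
    exact_mod_cast h3
  · intro hmin a ha
    rw [hform τ hτ, D.canTrace_apply] at ha
    refine D.E_faithful a ?_
    set h : C(T1, ℂ) := D.E (star a * a) with hh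
    have hre : ∀ x, ((h x).re : ℂ) = h x := fun x =>
      Complex.ext (by simp) (by simp [(D.E_nonneg a x).2, hh])
    have hi : Integrable (fun x => (h x).re) μ :=
      (show Continuous fun x => (h x).re by fun_prop).integrable_of_hasCompactSupport
        (HasCompactSupport.of_compactSpace _)
    have hint : ∫ x, (h x).re ∂μ = 0 := by
      have : ((∫ x, (h x).re ∂μ : ℝ) : ℂ) = 0 := by
        rw [← integral_complex_ofReal]
        simpa only [hre] using ha
      exact_mod_cast this
    have hae : ∀ᵐ x ∂μ, h x = 0 := by
      have := (integral_eq_zero_iff_of_nonneg (fun x => (D.E_nonneg a x).1) hi).1 hint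
      filter_upwards [this] with x hx
      rw [← hre x, hx]
      simp
    have hall : ∀ᵐ x ∂μ, ∀ g : G, h (g • x) = 0 := by
      rw [ae_all_iff]
      intro g
      have hmg := (D.cont_smul g).measurable.aemeasurable (μ := μ)
      rw [← hμinv g] at hae
      exact ae_of_ae_map hmg hae
    have hZ := hmin.2.2.2 {x | ∀ g : G, h (g • x) = 0} hall.exists ?_ ?_ (Set.subset_univ _)
    · ext x
      have hx : x ∈ {x | ∀ g : G, h (g • x) = 0} := hZ ▸ Set.mem_univ x
      have := hx 1
      rwa [one_smul] at this
    · have : {x : T1 | ∀ g : G, h (g • x) = 0} = ⋂ g : G, {x | h (g • x) = 0} := by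
        ext x
        simp
      rw [this]
      exact isClosed_iInter fun g =>
        isClosed_eq (h.continuous.comp (D.cont_smul g)) continuous_const
    · intro k x hx g
      rw [smul_smul]
      exact hx _
end
end
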